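/- arXiv:1411.2759 — 2 statements merged into one kernel-verified Lean document; each statement's English description precedes it below -/
import Mathlib

section
/- If a map F ∈ S(Ω) exhibits the strips pattern τ, then h(F) ≥ h(F_τ) = h(f_τ), where f_τ is a τ-linear interval map and F_τ is the quasiperiodic τ-linear map. -/
open Dynamics Set

noncomputable section

/-- The circle `S¹ = ℝ/ℤ`. -/
abbrev S1 : Type := AddCircle (1 : ℝ)

/-- The unit interval `I = [0,1]` as a type. -/
abbrev II : Type := Set.Icc (0 : ℝ) 1

/-- The cylinder `Ω = S¹ × I`. -/
abbrev Cyl : Type := S1 × II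

/-- The fiber of a subset of the cylinder over `θ ∈ S¹`. -/
def fiber (A : Set Cyl) (θ : S1) : Set II := {x : II | (θ, x) ∈ A}

/-- `M_A θ = max {x ∈ I : (θ, x) ∈ A}`. -/
def MA (A : Set Cyl) (θ : S1) : ℝ := sSup (Subtype.val '' fiber A θ)

/-- `m_A θ = min {x ∈ I : (θ, x) ∈ A}`. -/
def mA (A : Set Cyl) (θ : S1) : ℝ := sInf (Subtype.val '' fiber A θ)

/-- A strip: a closed set projecting onto all of `S¹` whose fibers over a residual
set of `θ`'s are (possibly degenerate) nonempty closed intervals. -/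
def IsStrip (A : Set Cyl) : Prop :=
  IsClosed A ∧ (∀ θ : S1, ∃ x : II, (θ, x) ∈ A) ∧
    ∃ G ∈ residual S1, ∀ θ ∈ G, ∃ a b : II, a ≤ b ∧ fiber A θ = Set.Icc a b

/-- `A < B` for strips. -/
def stripLT (A B : Set Cyl) : Prop := ∃ G ∈ residual S1, ∀ θ ∈ G, MA A θ < mA B θ

/-- `A ≤ B` for strips. -/
def stripLE (A B : Set Cyl) : Prop := ∃ G ∈ residual S1, ∀ θ ∈ G, MA A θ ≤ mA B θ

/-- Two strips are ordered if `A < B` or `B < A`. -/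
def StripOrdered (A B : Set Cyl) : Prop := stripLT A B ∨ stripLT B A

/-- Two strips are weakly ordered if `A ≤ B` or `B ≤ A`. -/
def StripWeaklyOrdered (A B : Set Cyl) : Prop := stripLE A B ∨ stripLE B A

/-- The class `S(Ω)` of quasiperiodically forced skew-products on the cylinder:
continuous maps whose first coordinate is an irrational rotation. -/
def IsQPF (F : Cyl → Cyl) : Prop :=
  Continuous F ∧ ∃ ω : ℝ, Irrational ω ∧ ∀ p : Cyl, (F p).1 = p.1 + (ω : S1)

/-- `B` is an `n`-periodic strip of `F`: `F^n(B) = B` and the iterates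
`B, F(B), …, F^{n-1}(B)` are pairwise disjoint and pairwise ordered. -/
def IsPeriodicStripOrbit (F : Cyl → Cyl) (n : ℕ) (B : Set Cyl) : Prop :=
  IsStrip B ∧ F^[n] '' B = B ∧
    ∀ i j : ℕ, i < j → j < n →
      Disjoint (F^[i] '' B) (F^[j] '' B) ∧ StripOrdered (F^[i] '' B) (F^[j] '' B)

/-- A cyclic permutation: the (forward) orbit of any point is everything. -/
def IsCyclicPerm {n : ℕ} (τ : Equiv.Perm (Fin n)) : Prop :=
  ∀ i j : Fin n, ∃ k : ℕ, (τ ^ k) i = j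

/-- `F` exhibits the strips pattern `τ`: it has a periodic orbit of strips,
spatially labelled, moved around according to `τ`. -/
def ExhibitsStripPattern (F : Cyl → Cyl) {n : ℕ} (τ : Equiv.Perm (Fin n)) : Prop :=
  ∃ B : Fin n → Set Cyl,
    (∀ i, IsStrip (B i)) ∧
    (∀ i j : Fin n, i < j → stripLT (B i) (B j)) ∧
    (Pairwise fun i j => Disjoint (B i) (B j)) ∧
    (∀ i, F '' B i = B (τ i))

/-- A continuous interval map has a periodic orbit with interval pattern `τ`. -/
def HasIntervalPattern (f : II → II) {n : ℕ} (τ : Equiv.Perm (Fin n)) : Prop :=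
  ∃ p : Fin n → II, StrictMono p ∧ ∀ i, f (p i) = p (τ i)

/-- `τ` forces `ν` as interval patterns. -/
def ForcesI {n m : ℕ} (τ : Equiv.Perm (Fin n)) (ν : Equiv.Perm (Fin m)) : Prop :=
  ∀ f : II → II, Continuous f → HasIntervalPattern f τ → HasIntervalPattern f ν

/-- `τ` forces `ν` in `Ω`. -/
def ForcesOmega {n m : ℕ} (τ : Equiv.Perm (Fin n)) (ν : Equiv.Perm (Fin m)) : Prop :=
  ∀ F : Cyl → Cyl, IsQPF F → ExhibitsStripPattern F τ → ExhibitsStripPattern F ν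

/-- `p >_Sh q` in the Sharkovskiĭ ordering. -/
def SharkGT (p q : ℕ) : Prop :=
  ∃ i m j l : ℕ, Odd m ∧ Odd l ∧ p = 2 ^ i * m ∧ q = 2 ^ j * l ∧
    ((m = 1 ∧ l = 1 ∧ j < i) ∨ (1 < m ∧ l = 1) ∨
      (1 < m ∧ 1 < l ∧ (i < j ∨ (i = j ∧ m < l))))

/-- The core of a subset of the cylinder. -/
def core (M : Set Cyl) : Set Cyl :=
  ⋂ (G : Set S1) (_ : G ∈ residual S1), closure (M ∩ Prod.fst ⁻¹' G)

/-- A band is a strip equal to its core. -/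
def IsBand (A : Set Cyl) : Prop := IsStrip A ∧ core A = A

/-- Continuity points of a real-valued function on the circle. -/
def contPts (g : S1 → ℝ) : Set S1 := {θ | ContinuousAt g θ}

/-- The top cover `A⁺` of a strip: the closure of the graph of `M_A` restricted to its
residual set of continuity points. -/
def topCover (A : Set Cyl) : Set Cyl :=
  closure {p : Cyl | p.1 ∈ contPts (MA A) ∧ (p.2 : ℝ) = MA A p.1}

/-- The bottom cover `A⁻` of a strip. -/
def botCover (A : Set Cyl) : Set Cyl :=
  closure {p : Cyl | p.1 ∈ contPts (mA A) ∧ (p.2 : ℝ) = mA A p.1}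

/-- `A` positively `F`-covers `B`. -/
def FCoversPos (F : Cyl → Cyl) (A B : Set Cyl) : Prop :=
  stripLE (F '' botCover A) (botCover B) ∧ stripLE (topCover B) (F '' topCover A)

/-- `A` negatively `F`-covers `B`. -/
def FCoversNeg (F : Cyl → Cyl) (A B : Set Cyl) : Prop :=
  stripLE (topCover B) (F '' botCover A) ∧ stripLE (F '' topCover A) (botCover B)

/-- `A` `F`-covers `B`. -/
def FCovers (F : Cyl → Cyl) (A B : Set Cyl) : Prop := FCoversPos F A B ∨ FCoversNeg F A B

/-- An `s`-horseshoe `(J, D)` for `F`. -/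
def IsHorseshoe (F : Cyl → Cyl) (s : ℕ) (J : Set Cyl) (D : Finset (Set Cyl)) : Prop :=
  2 ≤ s ∧ D.card = s ∧ IsBand J ∧
    (∀ L ∈ D, IsBand L ∧ (interior L).Nonempty ∧ FCovers F L J) ∧
    (∀ L ∈ D, ∀ L' ∈ D, L ≠ L' → StripWeaklyOrdered L L')

/-- Topological entropy (cover entropy of the whole space). -/
def hTop {X : Type} [UniformSpace X] (F : X → X) : EReal := coverEntropy F Set.univ

/-- A pseudo-curve: the closure of the graph of a continuous map from a residual
subset of the circle to the interval. -/
def IsPseudoCurve (A : Set Cyl) : Prop :=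
  ∃ G ∈ residual S1, ∃ φ : S1 → II, Continuous (G.restrict φ) ∧
    A = closure {p : Cyl | p.1 ∈ G ∧ p.2 = φ p.1}

/-- The band `E_{AB}` between two pseudo-curves `A < B`. -/
def bandBetween (A B : Set Cyl) : Set Cyl :=
  closure {p : Cyl | p.1 ∈ contPts (MA A) ∧ p.1 ∈ contPts (mA B) ∧
    MA A p.1 < (p.2 : ℝ) ∧ (p.2 : ℝ) < mA B p.1}

/-- `f` is affine on the subinterval `[a, b]` of `I`. -/
def AffineOnIcc (f : II → II) (a b : II) : Prop :=
  ∀ x : II, a ≤ x → x ≤ b →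
    ((b : ℝ) - (a : ℝ)) * ((f x : ℝ) - (f a : ℝ)) =
      ((x : ℝ) - (a : ℝ)) * ((f b : ℝ) - (f a : ℝ))

/-- `f` is the `P`-linear (connect-the-dots) map over the points `p 0 < p 1 < … < p n`:
continuous, affine on each `[p i, p (i+1)]` and constant on both components of
`I ∖ [p 0, p n]`. -/
def IsPLinear {n : ℕ} (f : II → II) (p : Fin (n + 1) → II) : Prop :=
  Continuous f ∧
    (∀ k : Fin n, AffineOnIcc f (p k.castSucc) (p k.succ)) ∧
    (∀ x : II, x ≤ p 0 → f x = f (p 0)) ∧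
    (∀ x : II, p (Fin.last n) ≤ x → f x = f (p (Fin.last n)))

/-- Signed arrow between basic intervals `J_k = [p k, p (k+1)]` and `J_l` in the
`P`-signed Markov graph of `f` (`true` = positive covering, `false` = negative). -/
def IArrow {n : ℕ} (f : II → II) (p : Fin (n + 1) → II) (s : Bool) (k l : Fin n) : Prop :=
  if s then
    (f (p k.castSucc) : ℝ) ≤ (p l.castSucc : ℝ) ∧ (p l.succ : ℝ) ≤ (f (p k.succ) : ℝ)
  else
    (f (p k.succ) : ℝ) ≤ (p l.castSucc : ℝ) ∧ (p l.succ : ℝ) ≤ (f (p k.castSucc) : ℝ)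

/-- A loop of length `m` in the `P`-signed Markov graph of `f`, encoded as `m`-periodic
sequences of vertices (basic intervals) and signs. -/
def IsILoop {n : ℕ} (f : II → II) (p : Fin (n + 1) → II) (m : ℕ)
    (v : ℕ → Fin n) (s : ℕ → Bool) : Prop :=
  0 < m ∧ (∀ i, v (i + m) = v i) ∧ (∀ i, s (i + m) = s i) ∧
    ∀ i, IArrow f p (s i) (v i) (v (i + 1))

/-- A periodic point `x` of (exact) period `m` is associated to the loop with vertex
sequence `v` if `f^i(x) ∈ J_{v i}` for all `i`. -/
def IAssocPt {n : ℕ} (f : II → II) (p : Fin (n + 1) → II) (m : ℕ)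
    (x : II) (v : ℕ → Fin n) : Prop :=
  f^[m] x = x ∧ (∀ i : ℕ, 0 < i → i < m → f^[i] x ≠ x) ∧
    ∀ i : ℕ, p (v i).castSucc ≤ f^[i] x ∧ f^[i] x ≤ p (v i).succ

/-- The sign (`true` = `+`) of the initial segment of length `k` of a signed path. -/
def signAt (s : ℕ → Bool) (k : ℕ) : Bool :=
  decide (Even ((Finset.range k).filter (fun i => s i = false)).card)

/-- Lexicographic ordering of (infinite liftings of) signed paths, comparing the vertex
sequences `v` and `w`; at the first difference the comparison is reversed iff the sign
of the common initial segment is negative. -/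
def seqLT {n : ℕ} (v : ℕ → Fin n) (s : ℕ → Bool) (w : ℕ → Fin n) : Prop :=
  ∃ k : ℕ, (∀ i < k, v i = w i) ∧ v k ≠ w k ∧ (v k < w k ↔ signAt s k = true)

/-- The shift of a sequence by `i`. -/
def shiftSeq {α : Type} (v : ℕ → α) (i : ℕ) : ℕ → α := fun j => v (i + j)

/-- A loop of length `m` (given by `m`-periodic sequences) is simple if it is not the
repetition of a shorter loop. -/
def SimpleLoop {α β : Type} (m : ℕ) (v : ℕ → α) (s : ℕ → β) : Prop :=
  ¬ ∃ d : ℕ, 0 < d ∧ d < m ∧ d ∣ m ∧ (∀ i, v (i + d) = v i) ∧ (∀ i, s (i + d) = s i)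

/-- The basic bands associated to a (spatially labelled) periodic orbit of strips
`B 0 < B 1 < … < B n`: `I_{B_k B_{k+1}} = E_{(B_k)⁺ (B_{k+1})⁻}`. -/
def basicBand {n : ℕ} (B : Fin (n + 1) → Set Cyl) (k : Fin n) : Set Cyl :=
  bandBetween (topCover (B k.castSucc)) (botCover (B k.succ))

/-- Signed arrow between bands in a signed Markov graph of `F`. -/
def BArrow (F : Cyl → Cyl) (s : Bool) (A B : Set Cyl) : Prop :=
  if s then FCoversPos F A B else FCoversNeg F A B

/-- A loop of length `m` in the signed Markov graph of `F` over the basic bands of the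
periodic orbit of strips `B`. -/
def IsBLoop (F : Cyl → Cyl) {n : ℕ} (B : Fin (n + 1) → Set Cyl) (m : ℕ)
    (v : ℕ → Fin n) (s : ℕ → Bool) : Prop :=
  0 < m ∧ (∀ i, v (i + m) = v i) ∧ (∀ i, s (i + m) = s i) ∧
    ∀ i, BArrow F (s i) (basicBand B (v i)) (basicBand B (v (i + 1)))

/-- Equality of patterns given as cyclic permutations of possibly different index sets. -/
def PatternEqNat {a b : ℕ} (τ : Equiv.Perm (Fin a)) (ν : Equiv.Perm (Fin b)) : Prop :=
  a = b ∧ ∀ (i : Fin a) (j : Fin b), (i : ℕ) = (j : ℕ) → ((τ i : ℕ) = (ν j : ℕ))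

/-- The entropy of a strips pattern: the infimum of the entropies of the maps in `S(Ω)`
exhibiting it. -/
def patternEntropy {n : ℕ} (τ : Equiv.Perm (Fin n)) : EReal :=
  sInf {e : EReal | ∃ F : Cyl → Cyl, IsQPF F ∧ ExhibitsStripPattern F τ ∧ e = hTop F}

end

/-- dyn cover, elementary form -/
def MCover {X : Type} [PseudoMetricSpace X] (T : X → X) (ε : ℝ) (K : ℕ) (t : Finset X) : Prop :=
  ∀ y, ∃ z ∈ t, ∀ j < K, dist (T^[j] y) (T^[j] z) < ε

lemma mcover_iff {X : Type} [PseudoMetricSpace X] (T : X → X) (ε : ℝ) (K : ℕ) (t : Finset X) :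
    IsDynCoverOf T univ {p : X × X | dist p.1 p.2 < ε} K (t : Set X) ↔ MCover T ε K t := by
  simp only [IsDynCoverOf, SetRel.IsCover, mem_univ, mem_dynEntourage, MCover, forall_true_left]
  rfl

lemma growth_contra {A C q : ℝ} (hA : 0 < A) (hq : 0 < q)
    (hqA : q < A) (h : ∀ᶠ k : ℕ in Filter.atTop, A ^ k ≤ C * (k + 1) * q ^ k) : False := by
  have hr : q / A < 1 := (div_lt_one hA).2 hqA
  have hr0 : 0 ≤ q / A := by positivity
  have t1 := tendsto_self_mul_const_pow_of_lt_one hr0 hr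
  have t2 := tendsto_pow_atTop_nhds_zero_of_lt_one hr0 hr
  have t3 := ((t1.add t2).const_mul C)
  simp only [add_zero, mul_zero] at t3
  have h4 := t3.eventually (gt_mem_nhds (show (0:ℝ) < 1 by norm_num))
  obtain ⟨k, h5, h6⟩ := (h4.and h).exists
  have hAk : 0 < A ^ k := by positivity
  have : C * (k * (q / A) ^ k + (q / A) ^ k) = C * (k + 1) * q ^ k / A ^ k := by
    rw [div_pow]; field_simp
  rw [this, div_lt_one hAk] at h5
  linarith

lemma ennlog_natcast {N : ℕ} (hN : 0 < N) : ENNReal.log (N : ENNReal) = ((Real.log N : ℝ) : EReal) := by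
  have : (N : ENNReal) = ENNReal.ofReal (N : ℝ) := by simp
  rw [this, ENNReal.log_ofReal_of_pos (by exact_mod_cast hN)]

lemma growth {X Y : Type} [PseudoMetricSpace X] [PseudoMetricSpace Y] [Nonempty X] [Nonempty Y]
    (T : X → X) (S : Y → Y)
    (H : ∀ ε > 0, ∀ δ > 0, ∃ η > 0, ∃ m : ℕ, 0 < m ∧ ∃ C q : ℝ, 0 < q ∧ q < Real.exp (δ * m) ∧
      ∀ k : ℕ, 0 < k → ∀ t : Finset Y, MCover S η (m * k) t →
        ∃ s : Finset X, MCover T ε (m * k) s ∧ (s.card : ℝ) ≤ C * (k + 1) * q ^ k * t.card) :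
    coverEntropy T univ ≤ coverEntropy S univ := by
  by_contra hlt
  rw [not_le] at hlt
  rw [coverEntropy_eq_iSup_basis Metric.uniformity_basis_dist T] at hlt
  obtain ⟨ε, hlt⟩ := lt_iSup_iff.1 hlt
  obtain ⟨hε, hlt⟩ := lt_iSup_iff.1 hlt
  obtain ⟨a, ha1, ha2⟩ := EReal.lt_iff_exists_real_btwn.1 hlt
  obtain ⟨b, hb1, hb2⟩ := EReal.lt_iff_exists_real_btwn.1 ha2
  have hab : a < b := by exact_mod_cast hb1
  obtain ⟨η, hη, m, hm, C, q, hq, hqe, h⟩ := H (ε / 2) (half_pos hε) (b - a) (by linarith)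
  have hS : coverEntropyEntourage S univ {p : Y × Y | dist p.1 p.2 < η} < a :=
    (coverEntropyEntourage_le_coverEntropy S univ (Metric.dist_mem_uniformity hη)).trans_lt ha1
  have hev : ∀ᶠ K : ℕ in Filter.atTop,
      ENNReal.log (coverMincard S univ {p : Y × Y | dist p.1 p.2 < η} K) / K < a :=
    Filter.eventually_lt_of_limsup_lt hS
  refine growth_contra (A := Real.exp ((b - a) * m)) (C := C) (q := q) (Real.exp_pos _) hq hqe ?_
  have hmk : Filter.Tendsto (fun k : ℕ => m * k) Filter.atTop Filter.atTop :=
    Filter.tendsto_id.const_mul_atTop' hm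
  filter_upwards [hmk.eventually hev, Filter.eventually_gt_atTop 0] with k hk hk0
  have hK : 0 < m * k := Nat.mul_pos hm hk0
  have hKE : (0 : EReal) < ((m * k : ℕ) : EReal) := by exact_mod_cast hK
  have hKR : (0 : ℝ) < ((m * k : ℕ) : ℝ) := by exact_mod_cast hK
  rw [EReal.div_lt_iff hKE (EReal.natCast_ne_top _)] at hk
  have hfin : coverMincard S univ {p : Y × Y | dist p.1 p.2 < η} (m * k) < ⊤ := by
    rw [lt_top_iff_ne_top]
    intro htop
    rw [htop] at hk
    simp at hk
  obtain ⟨t, ht, htc⟩ := (coverMincard_finite_iff _ _ _ _).1 hfin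
  rw [← htc] at hk
  rw [mcover_iff] at ht
  have htpos : 0 < t.card := by
    obtain ⟨z, hz, _⟩ := ht (Classical.arbitrary Y)
    exact Finset.card_pos.2 ⟨z, hz⟩
  have hk' : Real.log t.card < a * (m * k : ℕ) := by
    have : ((t.card : ℕ∞) : ENNReal) = (t.card : ENNReal) := by simp
    rw [this, ennlog_natcast htpos] at hk
    exact_mod_cast hk
  obtain ⟨s, hs, hsc⟩ := h k hk0 t ht
  have hspos : 0 < s.card := by
    obtain ⟨z, hz, _⟩ := hs (Classical.arbitrary X)
    exact Finset.card_pos.2 ⟨z, hz⟩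
  rw [← mcover_iff] at hs
  have : SetRel.IsSymm {p : X × X | dist p.1 p.2 < ε / 2} :=
    ⟨fun x y hxy => by simpa [dist_comm] using hxy⟩
  have h1 := hs.coverEntropyEntourage_le_log_card_div (mapsTo_univ _ _) hK.ne'
  have hsub : SetRel.comp {p : X × X | dist p.1 p.2 < ε / 2} {p : X × X | dist p.1 p.2 < ε / 2} ⊆
      {p : X × X | dist p.1 p.2 < ε} := by
    rintro ⟨x, y⟩ ⟨z, h1, h2⟩
    have h1' : dist x z < ε / 2 := h1
    have h2' : dist z y < ε / 2 := h2
    show dist x y < ε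
    linarith [dist_triangle x z y]
  have h2 := (hb2.trans_le (coverEntropyEntourage_antitone T univ hsub)).trans_le h1
  rw [EReal.lt_div_iff hKE (EReal.natCast_ne_top _), ennlog_natcast hspos] at h2
  have h2' : b * (m * k : ℕ) < Real.log s.card := by exact_mod_cast h2
  have hsr : (0 : ℝ) < s.card := by exact_mod_cast hspos
  have htr : (0 : ℝ) < t.card := by exact_mod_cast htpos
  have h3 := (Real.lt_log_iff_exp_lt hsr).1 h2'
  have h4 := (Real.log_lt_iff_lt_exp htr).1 hk'
  have h5 : Real.exp ((b - a) * m) ^ k = Real.exp (b * (m * k : ℕ)) / Real.exp (a * (m * k : ℕ)) := by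
    rw [← Real.exp_nat_mul, ← Real.exp_sub]; congr 1; push_cast; ring
  rw [h5, div_le_iff₀ (Real.exp_pos _)]
  have h6 : 0 < C * (k + 1) * q ^ k := by
    by_contra hneg
    push Not at hneg
    nlinarith
  nlinarith

lemma iter_rot {ω : S1} {T : Cyl → Cyl} (h : ∀ p, (T p).1 = p.1 + ω) (j : ℕ) (p : Cyl) :
    (T^[j] p).1 = p.1 + j • ω := by
  induction j with
  | zero => simp
  | succ j ih => rw [Function.iterate_succ_apply', h, ih, succ_nsmul, add_assoc]

lemma iter_snd {ω : S1} {f : II → II} {T : Cyl → Cyl} (h : ∀ q, T q = (q.1 + ω, f q.2)) (j : ℕ)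
    (p : Cyl) : (T^[j] p).2 = f^[j] p.2 := by
  induction j with
  | zero => simp
  | succ j ih => rw [Function.iterate_succ_apply', Function.iterate_succ_apply', h, ih]

lemma hTop_prod (fτ : II → II) (ω : ℝ)
    (Fτ : Cyl → Cyl) (hFτ : ∀ q : Cyl, Fτ q = (q.1 + (ω : S1), fτ q.2)) :
    hTop Fτ = hTop fτ := by
  unfold hTop
  apply le_antisymm
  · apply growth
    intro ε hε δ hδ
    obtain ⟨Q, _, hQf, hQ⟩ := finite_cover_balls_of_compact (isCompact_univ (X := S1)) hε
    refine ⟨ε, hε, 1, one_pos, hQf.toFinset.card, 1, one_pos, Real.one_lt_exp_iff.2 (by simpa using hδ), ?_⟩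
    intro k hk t ht
    refine ⟨hQf.toFinset ×ˢ t, ?_, ?_⟩
    · intro y
      obtain ⟨z, hz, hzd⟩ := ht y.2
      have := hQ (mem_univ y.1)
      simp only [mem_iUnion, Metric.mem_ball, exists_prop] at this
      obtain ⟨c, hc, hcd⟩ := this
      refine ⟨(c, z), by simp [hc, hz], fun j hj => ?_⟩
      rw [Prod.dist_eq, max_lt_iff]
      have h1 : ∀ p, (Fτ p).1 = p.1 + (ω : S1) := fun p => by rw [hFτ]
      rw [iter_rot h1, iter_rot h1, iter_snd hFτ, iter_snd hFτ]
      simp only [dist_add_right]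
      exact ⟨hcd, hzd j hj⟩
    · rw [Finset.card_product]
      push_cast
      have : (0 : ℝ) ≤ (hQf.toFinset.card : ℝ) * t.card := by positivity
      have hk' : (0 : ℝ) ≤ k := by positivity
      rw [one_pow]
      nlinarith
  · have := coverEntropy_image_le_of_uniformContinuous (S := Fτ) (T := fτ) (φ := Prod.snd)
      (fun q => by rw [hFτ]) uniformContinuous_snd univ
    rwa [image_univ_of_surjective Prod.snd_surjective] at this

lemma pullback_pos {β : Type} [LinearOrder β] [TopologicalSpace β] [OrderClosedTopology β]
    (g : II → β) (hg : Continuous g) {a b : II} (hab : a ≤ b) {c d : β} (hcd : c < d)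
    (ha : g a ≤ c) (hb : d ≤ g b) :
    ∃ a' b', a ≤ a' ∧ a' < b' ∧ b' ≤ b ∧ g a' = c ∧ g b' = d ∧
      ∀ x, a' < x → x < b' → c < g x ∧ g x < d := by
  have hK : IsCompact (Icc a b ∩ g ⁻¹' Ici d) :=
    isCompact_Icc.inter_right (isClosed_Ici.preimage hg)
  obtain ⟨b', ⟨⟨hb1, hb2⟩, hb3⟩, hbmin⟩ := hK.exists_isLeast ⟨b, ⟨hab, le_rfl⟩, hb⟩
  have hbmin' : ∀ x, a ≤ x → x < b' → g x < d := by
    intro x hx1 hx2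
    by_contra hcon
    exact absurd (hbmin ⟨⟨hx1, hx2.le.trans hb2⟩, not_lt.1 hcon⟩) (not_le.2 hx2)
  have hK2 : IsCompact (Icc a b' ∩ g ⁻¹' Iic c) :=
    isCompact_Icc.inter_right (isClosed_Iic.preimage hg)
  obtain ⟨a', ⟨⟨ha1, ha2⟩, ha3⟩, hamax⟩ := hK2.exists_isGreatest ⟨a, ⟨le_rfl, hb1⟩, ha⟩
  simp only [mem_preimage, mem_Ici, mem_Iic] at hb3 ha3
  have hamax' : ∀ x, a' < x → x ≤ b' → c < g x := by
    intro x hx1 hx2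
    by_contra hcon
    exact absurd (hamax ⟨⟨ha1.trans hx1.le, hx2⟩, not_lt.1 hcon⟩) (not_le.2 hx1)
  have hlt : a' < b' := by
    rcases ha2.lt_or_eq with h | h
    · exact h
    · rw [h] at ha3
      exact absurd (hb3.trans ha3) (not_le.2 hcd)
  refine ⟨a', b', ha1, hlt, hb2, ?_, ?_, fun x h1 h2 => ⟨hamax' x h1 h2.le, hbmin' x (ha1.trans h1.le) h2⟩⟩
  · obtain ⟨z, hz, hzc⟩ := intermediate_value_Icc hlt.le hg.continuousOn ⟨ha3, hcd.le.trans hb3⟩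
    rcases hz.1.lt_or_eq with h | h
    · exact absurd hzc (hamax' z h hz.2).ne'
    · rw [h, hzc]
  · obtain ⟨z, hz, hzc⟩ := intermediate_value_Icc hlt.le hg.continuousOn ⟨ha3.trans hcd.le, hb3⟩
    rcases hz.2.lt_or_eq with h | h
    · exact absurd hzc (hbmin' z (ha1.trans hz.1) h).ne
    · rw [← h, hzc]

/-- `g` maps the interval `[a,b]` across `[c,d]`. -/
def Crosses (g : II → II) (a b c d : II) : Prop :=
  (g a ≤ c ∧ d ≤ g b) ∨ (g b ≤ c ∧ d ≤ g a)

lemma pullback (g : II → II) (hg : Continuous g) {a b c d : II} (hab : a ≤ b) (hcd : c < d)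
    (h : Crosses g a b c d) :
    ∃ a' b', a ≤ a' ∧ a' < b' ∧ b' ≤ b ∧ ((g a' = c ∧ g b' = d) ∨ (g a' = d ∧ g b' = c)) ∧
      ∀ x, a' < x → x < b' → c < g x ∧ g x < d := by
  rcases h with ⟨h1, h2⟩ | ⟨h1, h2⟩
  · obtain ⟨a', b', h3, h4, h5, h6, h7, h8⟩ := pullback_pos g hg hab hcd h1 h2
    exact ⟨a', b', h3, h4, h5, Or.inl ⟨h6, h7⟩, h8⟩
  · obtain ⟨a', b', h3, h4, h5, h6, h7, h8⟩ := pullback_pos (β := IIᵒᵈ)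
      (fun x => OrderDual.toDual (g x)) (continuous_toDual.comp hg) hab
      (c := OrderDual.toDual d) (d := OrderDual.toDual c) hcd h2 h1
    exact ⟨a', b', h3, h4, h5, Or.inr ⟨h6, h7⟩, fun x hx1 hx2 => ⟨(h8 x hx1 hx2).2, (h8 x hx1 hx2).1⟩⟩

lemma itinerary {T : Cyl → Cyl} (hT : Continuous T) {α : S1} (hα : ∀ p, (T p).1 = p.1 + α)
    (k : ℕ) : ∀ (θ : S1) (a b : ℕ → II), (∀ j, a j < b j) →
    (∀ j, Crosses (fun x => (T (θ + j • α, x)).2) (a j) (b j) (a (j + 1)) (b (j + 1))) →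
    ∃ c d, a 0 ≤ c ∧ c < d ∧ d ≤ b 0 ∧
      (((T^[k] (θ, c)).2 = a k ∧ (T^[k] (θ, d)).2 = b k) ∨
        ((T^[k] (θ, c)).2 = b k ∧ (T^[k] (θ, d)).2 = a k)) ∧
      ∀ x, c < x → x < d → ∀ j ≤ k, a j < (T^[j] (θ, x)).2 ∧ (T^[j] (θ, x)).2 < b j := by
  induction k with
  | zero =>
    intro θ a b hab _
    refine ⟨a 0, b 0, le_rfl, hab 0, le_rfl, Or.inl ⟨rfl, rfl⟩, ?_⟩
    intro x h1 h2 j hj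
    obtain rfl : j = 0 := by omega
    exact ⟨h1, h2⟩
  | succ k ih =>
    intro θ a b hab hc
    obtain ⟨c', d', h1, h2, h3, h4, h5⟩ := ih (θ + α) (fun j => a (j + 1)) (fun j => b (j + 1))
      (fun j => hab _) (fun j => by
        have := hc (j + 1)
        rwa [succ_nsmul', ← add_assoc] at this)
    have hc0 := hc 0
    rw [zero_nsmul, add_zero] at hc0
    have hg : Continuous (fun x => (T (θ, x)).2) := by fun_prop
    have hcr : Crosses (fun x => (T (θ, x)).2) (a 0) (b 0) c' d' := by
      rcases hc0 with ⟨u, v⟩ | ⟨u, v⟩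
      · exact Or.inl ⟨u.trans h1, h3.trans v⟩
      · exact Or.inr ⟨u.trans h1, h3.trans v⟩
    obtain ⟨c, d, e1, e2, e3, e4, e5⟩ := pullback _ hg (hab 0).le h2 hcr
    have hstep : ∀ x, T (θ, x) = (θ + α, (T (θ, x)).2) := fun x => Prod.ext (hα _) rfl
    have hit : ∀ x j, T^[j + 1] (θ, x) = T^[j] (θ + α, (T (θ, x)).2) := fun x j => by
      rw [Function.iterate_succ_apply, ← hstep]
    refine ⟨c, d, e1, e2, e3, ?_, ?_⟩
    · rw [hit, hit]
      rcases e4 with ⟨u, v⟩ | ⟨u, v⟩ <;> rw [u, v]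
      · exact h4
      · rcases h4 with ⟨u, v⟩ | ⟨u, v⟩
        · exact Or.inr ⟨v, u⟩
        · exact Or.inl ⟨v, u⟩
    · intro x hx1 hx2 j hj
      rcases j with _ | j
      · exact ⟨e1.trans_lt hx1, hx2.trans_le e3⟩
      · rw [hit]
        exact h5 _ (e5 x hx1 hx2).1 (e5 x hx1 hx2).2 j (by omega)

/-- Arrow in the Markov graph of the pattern. -/
def Edge {n : ℕ} (τ : Equiv.Perm (Fin (n + 1))) (k l : Fin n) : Prop :=
  (τ k.castSucc ≤ l.castSucc ∧ l.succ ≤ τ k.succ) ∨ (τ k.succ ≤ l.castSucc ∧ l.succ ≤ τ k.castSucc)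

/-- Infinite paths. -/
def IsPath {n : ℕ} (τ : Equiv.Perm (Fin (n + 1))) (v : ℕ → Fin n) : Prop :=
  ∀ i, Edge τ (v i) (v (i + 1))

/-- Prefixes of infinite paths. -/
def Words {n : ℕ} (τ : Equiv.Perm (Fin (n + 1))) (L : ℕ) : Set (Fin (L + 1) → Fin n) :=
  {r | ∃ v, IsPath τ v ∧ ∀ i : Fin (L + 1), r i = v i}

lemma find_cell {n : ℕ} (p : Fin (n + 1) → II) (y : II) (i i' : Fin (n + 1)) (h : i < i')
    (h1 : p i ≤ y) (h2 : y ≤ p i') :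
    ∃ l : Fin n, i ≤ l.castSucc ∧ l.succ ≤ i' ∧ p l.castSucc ≤ y ∧ y ≤ p l.succ := by
  induction i' using Fin.induction with
  | zero => exact absurd h (Fin.not_lt_zero _)
  | succ l ih =>
    by_cases hy : p l.castSucc ≤ y
    · exact ⟨l, by rw [Fin.lt_def] at h; rw [Fin.le_def]; simp at *; omega, le_rfl, hy, h2⟩
    · push Not at hy
      have hne : i ≠ l.castSucc := by
        rintro rfl
        exact absurd h1 (not_le.2 hy)
      have hlt : i < l.castSucc := by
        rw [Fin.lt_def] at *; have := Fin.val_ne_of_ne hne; simp at *; omega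
      obtain ⟨l', a, b, c, d⟩ := ih hlt hy.le
      exact ⟨l', a, b.trans (Fin.castSucc_lt_succ).le, c, d⟩

section upper
variable {n : ℕ} {τ : Equiv.Perm (Fin (n + 1))} {f : II → II} {p : Fin (n + 1) → II}

lemma f_ne (hp : StrictMono p) (hpat : ∀ i, f (p i) = p (τ i)) (k : Fin n) :
    (f (p k.succ) : ℝ) - f (p k.castSucc) ≠ 0 := by
  intro h
  have h1 : f (p k.succ) = f (p k.castSucc) := Subtype.ext (by linarith)
  rw [hpat, hpat] at h1
  have h2 := τ.injective (hp.injective h1)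
  exact absurd h2 (Fin.castSucc_lt_succ).ne'

lemma f_inj (hp : StrictMono p) (hlin : IsPLinear f p) (hpat : ∀ i, f (p i) = p (τ i)) (k : Fin n)
    {x y : II} (hx : p k.castSucc ≤ x ∧ x ≤ p k.succ) (hy : p k.castSucc ≤ y ∧ y ≤ p k.succ)
    (h : f x = f y) : x = y := by
  have h1 := hlin.2.1 k x hx.1 hx.2
  have h2 := hlin.2.1 k y hy.1 hy.2
  rw [h, h2] at h1
  have := mul_right_cancel₀ (f_ne hp hpat k) h1
  exact Subtype.ext (by linarith)

lemma f_next (hp : StrictMono p) (hlin : IsPLinear f p) (hpat : ∀ i, f (p i) = p (τ i)) (k : Fin n)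
    {x : II} (hx : p k.castSucc ≤ x ∧ x ≤ p k.succ) :
    ∃ l, Edge τ k l ∧ p l.castSucc ≤ f x ∧ f x ≤ p l.succ := by
  have h1 := hlin.2.1 k x hx.1 hx.2
  have hab : (p k.castSucc : ℝ) < p k.succ := hp (Fin.castSucc_lt_succ)
  have hx1 : (p k.castSucc : ℝ) ≤ x := hx.1
  have hx2 : (x : ℝ) ≤ p k.succ := hx.2
  rcases lt_or_gt_of_ne (f_ne hp hpat k) with hlt | hlt
  · have e1 : f (p k.succ) ≤ f x := by
      show (f (p k.succ) : ℝ) ≤ f x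
      nlinarith
    have e2 : f x ≤ f (p k.castSucc) := by
      show (f x : ℝ) ≤ f (p k.castSucc)
      nlinarith
    rw [hpat] at e1 e2
    have hl : τ k.succ < τ k.castSucc := by
      rw [hpat, hpat] at hlt
      rw [← hp.lt_iff_lt]
      show (p (τ k.succ) : ℝ) < p (τ k.castSucc)
      linarith
    obtain ⟨l, a, b, c, d⟩ := find_cell p (f x) _ _ hl e1 e2
    exact ⟨l, Or.inr ⟨a, b⟩, c, d⟩
  · have e1 : f (p k.castSucc) ≤ f x := by
      show (f (p k.castSucc) : ℝ) ≤ f x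
      nlinarith
    have e2 : f x ≤ f (p k.succ) := by
      show (f x : ℝ) ≤ f (p k.succ)
      nlinarith
    rw [hpat] at e1 e2
    have hl : τ k.castSucc < τ k.succ := by
      rw [hpat, hpat] at hlt
      rw [← hp.lt_iff_lt]
      show (p (τ k.castSucc) : ℝ) < p (τ k.succ)
      linarith
    obtain ⟨l, a, b, c, d⟩ := find_cell p (f x) _ _ hl e1 e2
    exact ⟨l, Or.inl ⟨a, b⟩, c, d⟩

lemma exists_itin (hp : StrictMono p) (hlin : IsPLinear f p) (hpat : ∀ i, f (p i) = p (τ i))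
    {x : II} (h0 : p 0 < x) (h1 : x < p (Fin.last n)) :
    ∃ v, IsPath τ v ∧ ∀ i, p (v i).castSucc ≤ f^[i] x ∧ f^[i] x ≤ p (v i).succ := by
  obtain ⟨l0, _, _, hl0⟩ := find_cell p x 0 (Fin.last n) (hp.lt_iff_lt.1 (h0.trans h1)) h0.le h1.le
  let St := {q : Fin n × II // p q.1.castSucc ≤ q.2 ∧ q.2 ≤ p q.1.succ}
  have hnext : ∀ q : St, ∃ q' : St, Edge τ q.1.1 q'.1.1 ∧ q'.1.2 = f q.1.2 := by
    rintro ⟨⟨k, y⟩, hy⟩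
    obtain ⟨l, hl, h⟩ := f_next hp hlin hpat k hy
    exact ⟨⟨⟨l, f y⟩, h⟩, hl, rfl⟩
  choose nx hnx1 hnx2 using hnext
  let s : ℕ → St := fun i => nx^[i] ⟨⟨l0, x⟩, hl0⟩
  have hs : ∀ i, (s i).1.2 = f^[i] x := by
    intro i
    induction i with
    | zero => rfl
    | succ i ih =>
      simp only [s] at ih ⊢
      rw [Function.iterate_succ_apply', Function.iterate_succ_apply', hnx2, ih]
  refine ⟨fun i => (s i).1.1, fun i => ?_, fun i => ?_⟩
  · have := hnx1 (s i)
    simp only [s] at this ⊢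
    rwa [← Function.iterate_succ_apply' nx] at this
  · rw [← hs]; exact (s i).2

lemma itin_inj (hp : StrictMono p) (hlin : IsPLinear f p) (hpat : ∀ i, f (p i) = p (τ i))
    {v : ℕ → Fin n} (j : ℕ) {x y : II}
    (hx : ∀ i < j, p (v i).castSucc ≤ f^[i] x ∧ f^[i] x ≤ p (v i).succ)
    (hy : ∀ i < j, p (v i).castSucc ≤ f^[i] y ∧ f^[i] y ≤ p (v i).succ)
    (h : f^[j] x = f^[j] y) : x = y := by
  induction j with
  | zero => exact h
  | succ j ih =>
    apply ih (fun i hi => hx i (by omega)) (fun i hi => hy i (by omega))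
    rw [Function.iterate_succ_apply', Function.iterate_succ_apply'] at h
    exact f_inj hp hlin hpat (v j) (hx j (by omega)) (hy j (by omega)) h

lemma grid {ε : ℝ} (hε : 0 < ε) : ∃ Q : Finset II, ∀ u v : II, ε ≤ dist u v →
    ∃ q ∈ Q, (u < q ∧ q < v) ∨ (v < q ∧ q < u) := by
  obtain ⟨Q, _, hQf, hQ⟩ := finite_cover_balls_of_compact (isCompact_univ (X := II)) (e := ε / 4) (by linarith)
  refine ⟨hQf.toFinset, ?_⟩
  have key : ∀ u v : II, u ≤ v → ε ≤ dist u v → ∃ q ∈ Q, u < q ∧ q < v := by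
    intro u v huv h
    have huv' : (u : ℝ) ≤ v := huv
    rw [Subtype.dist_eq, Real.dist_eq, abs_sub_comm, abs_of_nonneg (by linarith)] at h
    have hz := hQ (mem_univ (⟨((u : ℝ) + v) / 2, by constructor <;> linarith [u.2.1, u.2.2, v.2.1, v.2.2]⟩ : II))
    simp only [mem_iUnion, Metric.mem_ball, exists_prop] at hz
    obtain ⟨q, hq, hd⟩ := hz
    rw [Subtype.dist_eq, Real.dist_eq, abs_lt] at hd
    refine ⟨q, hq, ?_, ?_⟩
    · show (u : ℝ) < q
      linarith
    · show (q : ℝ) < v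
      linarith
  intro u v h
  rcases le_total u v with huv | huv
  · obtain ⟨q, h1, h2⟩ := key u v huv h
    exact ⟨q, by simpa using h1, Or.inl h2⟩
  · obtain ⟨q, h1, h2⟩ := key v u huv (by rwa [dist_comm])
    exact ⟨q, by simpa using h1, Or.inr h2⟩

lemma upper (hp : StrictMono p) (hlin : IsPLinear f p) (hpat : ∀ i, f (p i) = p (τ i))
    {ε : ℝ} (hε : 0 < ε) : ∃ C : ℕ, ∀ K : ℕ, ∃ s : Finset II, MCover f ε K s ∧
      s.card ≤ C * (K + 1) * ((Words τ K).ncard + 1) := by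
  classical
  obtain ⟨Q, hQ⟩ := grid hε
  refine ⟨Q.card + 3, fun K => ?_⟩
  let A : Set II := {x | p 0 < x ∧ x < p (Fin.last n) ∧ ∃ j < K, f^[j] x ∈ Q}
  have hA : ∀ x : A, ∃ z : Fin K × Q × Words τ K, f^[z.1] x = z.2.1 ∧
      ∀ i : Fin (K + 1), p (z.2.2.1 i).castSucc ≤ f^[i] x ∧ f^[i] (x : II) ≤ p (z.2.2.1 i).succ := by
    rintro ⟨x, h0, h1, j, hj, hq⟩
    obtain ⟨v, hv, hv2⟩ := exists_itin hp hlin hpat h0 h1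
    exact ⟨⟨⟨j, hj⟩, ⟨_, hq⟩, ⟨fun i => v i, v, hv, fun _ => rfl⟩⟩, rfl, fun i => hv2 i⟩
  choose φ hφ1 hφ2 using hA
  have hφ : Function.Injective φ := by
    intro x y hxy
    obtain ⟨v, hv, hv2⟩ := (φ x).2.2.2
    apply Subtype.ext
    refine itin_inj hp hlin hpat (v := v) (φ x).1 ?_ ?_ ?_
    · intro i hi
      have := hφ2 x ⟨i, by omega⟩
      rwa [hv2] at this
    · intro i hi
      have := hφ2 y ⟨i, by omega⟩
      rwa [← hxy, hv2] at this
    · rw [hφ1 x, hxy, hφ1 y]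
  have hfin : Finite A := Finite.of_injective φ hφ
  have hcard : A.ncard ≤ K * (Q.card * (Words τ K).ncard) := by
    have := Nat.card_le_card_of_injective φ hφ
    rwa [Nat.card_prod, Nat.card_prod, Nat.card_coe_set_eq, Nat.card_coe_set_eq, Nat.card_fin,
      Nat.card_eq_fintype_card, Fintype.card_coe] at this
  have hAf : A.Finite := hfin
  refine ⟨{0, p 0, p (Fin.last n)} ∪ Q ∪ hAf.toFinset, ?_, ?_⟩
  · intro x
    set s : Finset II := {0, p 0, p (Fin.last n)} ∪ Q ∪ hAf.toFinset with hs
    have hmem : ∀ y, y ∈ s ↔ (y = 0 ∨ y = p 0 ∨ y = p (Fin.last n)) ∨ y ∈ Q ∨ y ∈ A := by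
      intro y; simp [hs, or_assoc]
    have hne : (s.filter (· ≤ x)).Nonempty := ⟨0, by
      rw [Finset.mem_filter, hmem]
      exact ⟨Or.inl (Or.inl rfl), x.2.1⟩⟩
    obtain ⟨z, hz, hzmax⟩ := (s.filter (· ≤ x)).exists_max_image id hne
    rw [Finset.mem_filter] at hz
    have hgap : ∀ y ∈ s, z < y → x < y := by
      intro y hy hzy
      by_contra hcon
      exact absurd (hzmax y (Finset.mem_filter.2 ⟨hy, not_lt.1 hcon⟩)) (not_le.2 hzy)
    have hgap' : ∀ y ∈ s, z < y → y < x → False := fun y hy h1 h2 => lt_asymm h2 (hgap y hy h1)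
    refine ⟨z, hz.1, fun j hj => ?_⟩
    by_contra hcon
    rw [not_lt] at hcon
    -- intermediate point
    have hzx : z ≤ x := hz.2
    have hfc : Continuous (f^[j]) := hlin.1.iterate j
    obtain ⟨q, hq, hqb⟩ := hQ _ _ hcon
    have hex : ∃ y, z < y ∧ y < x ∧ f^[j] y = q := by
      rcases hqb with ⟨h1, h2⟩ | ⟨h1, h2⟩
      · obtain ⟨y, hy, hyq⟩ := intermediate_value_Icc' hzx hfc.continuousOn ⟨h1.le, h2.le⟩
        refine ⟨y, lt_of_le_of_ne hy.1 ?_, lt_of_le_of_ne hy.2 ?_, hyq⟩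
        · rintro rfl; exact h2.ne hyq.symm
        · rintro rfl; exact h1.ne hyq
      · obtain ⟨y, hy, hyq⟩ := intermediate_value_Icc hzx hfc.continuousOn ⟨h1.le, h2.le⟩
        refine ⟨y, lt_of_le_of_ne hy.1 ?_, lt_of_le_of_ne hy.2 ?_, hyq⟩
        · rintro rfl; exact h1.ne hyq
        · rintro rfl; exact h2.ne hyq.symm
    obtain ⟨y, hy1, hy2, hyq⟩ := hex
    rcases j with _ | j
    · have hyq' : y = q := hyq
      exact hgap' y ((hmem y).2 (Or.inr (Or.inl (hyq' ▸ hq)))) hy1 hy2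
    · have hcontr : f x = f z → False := by
        intro h
        rw [Function.iterate_succ_apply, Function.iterate_succ_apply, h, dist_self] at hcon
        linarith
      rcases le_or_gt x (p 0) with hx0 | hx0
      · exact hcontr (by rw [hlin.2.2.1 x hx0, hlin.2.2.1 z (hzx.trans hx0)])
      rcases le_or_gt (p (Fin.last n)) x with hx1 | hx1
      · have hz1 : p (Fin.last n) ≤ z := by
          by_contra hc
          exact absurd hx1 (not_le.2 (hgap _ ((hmem _).2 (Or.inl (Or.inr (Or.inr rfl)))) (not_le.1 hc)))
        exact hcontr (by rw [hlin.2.2.2 x hx1, hlin.2.2.2 z hz1])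
      have hz0 : p 0 ≤ z := by
        by_contra hc
        exact hgap' _ ((hmem _).2 (Or.inl (Or.inr (Or.inl rfl)))) (not_le.1 hc) hx0
      exact hgap' y ((hmem y).2 (Or.inr (Or.inr ⟨hz0.trans_lt hy1, hy2.trans hx1, j + 1, hj, hyq ▸ hq⟩))) hy1 hy2
  · have h1 : hAf.toFinset.card ≤ K * (Q.card * (Words τ K).ncard) := by
      rwa [← Set.ncard_eq_toFinset_card A hAf]
    have h2 : ({0, p 0, p (Fin.last n)} : Finset II).card ≤ 3 := Finset.card_le_three
    have h3 := Finset.card_union_le ({0, p 0, p (Fin.last n)} ∪ Q) hAf.toFinset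
    have h4 := Finset.card_union_le ({0, p 0, p (Fin.last n)} : Finset II) Q
    generalize (Words τ K).ncard = N at *
    generalize Q.card = c at *
    calc _ ≤ 3 + c + K * (c * N) := by omega
      _ ≤ (c + 3) * (K + 1) * (N + 1) := by
        have : 0 ≤ K * N * 3 + K * (c + 3) + N * (c + 3) := Nat.zero_le _
        nlinarith

end upper

open Classical in
/-- position code of the interval `(a,b)` relative to a point `Y`. -/
noncomputable def code (a b Y : II) : Fin 3 := if b ≤ Y then 0 else if Y ≤ a then 1 else 2

lemma code_inj {a b a' b' x x' Y : II} {η : ℝ} (h1 : a < x) (h2 : x < b) (h1' : a' < x') (h2' : x' < b')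
    (hd : dist x Y < η) (hd' : dist x' Y < η) (hl : η ≤ dist a b) (hl' : η ≤ dist a' b')
    (hdis : ∀ z, a < z → z < b → a' < z → z < b' → False) (hc : code a b Y = code a' b' Y) : False := by
  have hor : b ≤ a' ∨ b' ≤ a := by
    by_contra hcon
    push Not at hcon
    obtain ⟨z, hz1, hz2⟩ := exists_between (show max a a' < min b b' by
      simp only [max_lt_iff, lt_min_iff]
      exact ⟨⟨h1.trans h2, hcon.1⟩, hcon.2, h1'.trans h2'⟩)
    simp only [max_lt_iff, lt_min_iff] at hz1 hz2
    exact hdis z hz1.1 hz2.1 hz1.2 hz2.2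
  have g1 : (a : ℝ) < x := h1
  have g2 : (x : ℝ) < b := h2
  have g1' : (a' : ℝ) < x' := h1'
  have g2' : (x' : ℝ) < b' := h2'
  rw [Subtype.dist_eq, Real.dist_eq, abs_lt] at hd hd'
  rw [Subtype.dist_eq, Real.dist_eq, abs_sub_comm, abs_of_pos (by linarith)] at hl hl'
  have hor' : (b : ℝ) ≤ a' ∨ (b' : ℝ) ≤ a := hor
  unfold code at hc
  by_cases c1 : b ≤ Y <;> by_cases c2 : Y ≤ a <;> by_cases c3 : b' ≤ Y <;> by_cases c4 : Y ≤ a' <;>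
    simp [c1, c2, c3, c4] at hc <;>
    simp only [← Subtype.coe_le_coe, not_le] at c1 c2 c3 c4 <;>
    rcases hor' with h | h <;> linarith

section lower
variable {n : ℕ} {τ : Equiv.Perm (Fin (n + 1))}

lemma IsPath.shift {v : ℕ → Fin n} (hv : IsPath τ v) (j : ℕ) : IsPath τ (fun i => v (j + i)) :=
  fun i => hv (j + i)

lemma exists_top (A : Set Cyl) (hA : IsStrip A) (θ : S1) :
    ∃ x : II, (θ, x) ∈ A ∧ (∀ y, (θ, y) ∈ A → y ≤ x) ∧ MA A θ = x := by
  have hcl : IsClosed (fiber A θ) := hA.1.preimage (by fun_prop : Continuous fun x : II => (θ, x))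
  obtain ⟨x, hx, hmax⟩ := hcl.isCompact.exists_isGreatest (hA.2.1 θ)
  refine ⟨x, hx, fun y hy => hmax hy, ?_⟩
  apply IsGreatest.csSup_eq
  exact ⟨⟨x, hx, rfl⟩, by rintro _ ⟨y, hy, rfl⟩; exact hmax hy⟩

lemma exists_bot (A : Set Cyl) (hA : IsStrip A) (θ : S1) :
    ∃ x : II, (θ, x) ∈ A ∧ (∀ y, (θ, y) ∈ A → x ≤ y) ∧ mA A θ = x := by
  have hcl : IsClosed (fiber A θ) := hA.1.preimage (by fun_prop : Continuous fun x : II => (θ, x))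
  obtain ⟨x, hx, hmax⟩ := hcl.isCompact.exists_isLeast (hA.2.1 θ)
  refine ⟨x, hx, fun y hy => hmax hy, ?_⟩
  apply IsLeast.csInf_eq
  exact ⟨⟨x, hx, rfl⟩, by rintro _ ⟨y, hy, rfl⟩; exact hmax hy⟩

lemma gap {B : Fin (n + 1) → Set Cyl} (hB : ∀ i, IsStrip (B i))
    (hdisj : Pairwise fun i j => Disjoint (B i) (B j)) :
    ∃ δ > 0, ∀ k : Fin n, ∀ x ∈ B k.castSucc, ∀ y ∈ B k.succ, δ ≤ dist x y := by
  have : ∀ k : Fin n, ∃ δ : ℝ, 0 < δ ∧ ∀ x ∈ B k.castSucc, ∀ y ∈ B k.succ, δ ≤ dist x y := by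
    intro k
    obtain ⟨r, hr, h⟩ := Metric.exists_pos_forall_lt_edist (hB k.castSucc).1.isCompact
      (hB k.succ).1 (hdisj (Fin.castSucc_lt_succ (i := k)).ne)
    refine ⟨r, hr, fun x hx y hy => ?_⟩
    have := (h x hx y hy).le
    rw [edist_nndist] at this
    exact_mod_cast this
  choose δ hδ h using this
  rcases isEmpty_or_nonempty (Fin n) with he | he
  · exact ⟨1, one_pos, fun k => he.elim k⟩
  · obtain ⟨k0, hk0⟩ := Finite.exists_min δ
    exact ⟨δ k0, hδ k0, fun k x hx y hy => (hk0 k).trans (h k x hx y hy)⟩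

lemma lower {F : Cyl → Cyl} (hF : IsQPF F) (hEx : ExhibitsStripPattern F τ) (m : ℕ) (hm : 0 < m) :
    ∃ η > 0, ∀ k : ℕ, 0 < k → ∀ t : Finset Cyl, MCover F η (m * k) t →
      (Words τ (m * k)).ncard ≤ 3 ^ k * t.card := by
  classical
  obtain ⟨hFc, ω, -, hrot⟩ := hF
  obtain ⟨B, hB, hlt, hdisj, hFB⟩ := hEx
  choose tp htp1 htp2 htp3 using fun i θ => exists_top (B i) (hB i) θ
  choose bt hbt1 hbt2 hbt3 using fun i θ => exists_bot (B i) (hB i) θ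
  -- a generic fibre
  obtain ⟨θ0, hθ0⟩ : ∃ θ0 : S1, ∀ (j : ℕ) (i i' : Fin (n + 1)), i < i' →
      tp i (θ0 + j • (ω : S1)) < bt i' (θ0 + j • (ω : S1)) := by
    have hres : ∀ᶠ θ in residual S1, ∀ (j : ℕ) (i i' : Fin (n + 1)), i < i' →
        tp i (θ + j • (ω : S1)) < bt i' (θ + j • (ω : S1)) := by
      rw [eventually_countable_forall]
      intro j
      rw [eventually_countable_forall]
      intro i
      rw [eventually_countable_forall]
      intro i'
      by_cases hii : i < i'
      · obtain ⟨G, hG, hG2⟩ := hlt i i' hii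
        have ht := tendsto_residual_of_isOpenMap (f := fun θ : S1 => θ + j • (ω : S1))
          (by fun_prop) (isOpenMap_add_right _)
        filter_upwards [ht hG] with θ hθ _
        have := hG2 _ hθ
        rw [htp3, hbt3] at this
        exact this
      · exact Filter.Eventually.of_forall fun θ h => absurd h hii
    exact (dense_of_mem_residual hres).nonempty
  let Θ : ℕ → S1 := fun j => θ0 + j • (ω : S1)
  have hΘ : ∀ j i, Θ j + i • (ω : S1) = Θ (j + i) := fun j i => by
    simp only [Θ]; rw [add_assoc, ← add_nsmul]
  have hbtp : ∀ i θ, bt i θ ≤ tp i θ := fun i θ => htp2 i θ _ (hbt1 i θ)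
  have htmono : ∀ j i i', i ≤ i' → tp i (Θ j) ≤ tp i' (Θ j) := by
    intro j i i' h
    rcases h.lt_or_eq with h | rfl
    · exact (hθ0 j i i' h).le.trans (hbtp _ _)
    · exact le_rfl
  have hbmono : ∀ j i i', i ≤ i' → bt i (Θ j) ≤ bt i' (Θ j) := by
    intro j i i' h
    rcases h.lt_or_eq with h | rfl
    · exact (hbtp _ _).trans (hθ0 j i i' h).le
    · exact le_rfl
  have hK : ∀ j (k : Fin n), tp k.castSucc (Θ j) < bt k.succ (Θ j) := fun j k =>
    hθ0 j _ _ Fin.castSucc_lt_succ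
  have himg : ∀ j i x, (Θ j, x) ∈ B i → bt (τ i) (Θ (j + 1)) ≤ (F (Θ j, x)).2 ∧
      (F (Θ j, x)).2 ≤ tp (τ i) (Θ (j + 1)) := by
    intro j i x hx
    have h1 : F (Θ j, x) ∈ B (τ i) := hFB i ▸ mem_image_of_mem F hx
    have h2 : F (Θ j, x) = (Θ (j + 1), (F (Θ j, x)).2) := by
      apply Prod.ext
      · rw [hrot, ← hΘ j 1, one_nsmul]
      · rfl
    rw [h2] at h1
    exact ⟨hbt2 _ _ _ h1, htp2 _ _ _ h1⟩
  have hcross : ∀ j k l, Edge τ k l → Crosses (fun x => (F (Θ j, x)).2)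
      (tp k.castSucc (Θ j)) (bt k.succ (Θ j)) (tp l.castSucc (Θ (j + 1))) (bt l.succ (Θ (j + 1))) := by
    intro j k l hE
    have h1 := himg j k.castSucc _ (htp1 _ _)
    have h2 := himg j k.succ _ (hbt1 _ _)
    rcases hE with ⟨e1, e2⟩ | ⟨e1, e2⟩
    · exact Or.inl ⟨h1.2.trans (htmono _ _ _ e1), (hbmono _ _ _ e2).trans h2.1⟩
    · exact Or.inr ⟨h2.2.trans (htmono _ _ _ e1), (hbmono _ _ _ e2).trans h1.1⟩
  have hKdis : ∀ j (k l : Fin n) x, tp k.castSucc (Θ j) < x → x < bt k.succ (Θ j) →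
      tp l.castSucc (Θ j) < x → x < bt l.succ (Θ j) → k = l := by
    have key : ∀ j (k l : Fin n) x, k < l → x < bt k.succ (Θ j) → tp l.castSucc (Θ j) < x → False := by
      intro j k l x hkl h1 h2
      have h3 : k.succ ≤ l.castSucc := by
        rw [Fin.le_def]; rw [Fin.lt_def] at hkl; simp; omega
      exact absurd (h2.trans h1) (not_lt.2 ((hbmono j _ _ h3).trans (hbtp _ _)))
    intro j k l x h1 h2 h3 h4
    rcases lt_trichotomy k l with h | h | h
    · exact (key j k l x h h2 h3).elim
    · exact h
    · exact (key j l k x h h4 h1).elim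
  -- uniform sizes
  obtain ⟨δ, hδ, hgap⟩ := gap hB hdisj
  have hUC := CompactSpace.uniformContinuous_of_continuous (hFc.iterate m)
  obtain ⟨η, hη, hUC⟩ := Metric.uniformContinuous_iff.1 hUC δ hδ
  refine ⟨η, hη, fun k hk t ht => ?_⟩
  -- first level
  have hlev1 : ∀ (j : ℕ) (r : Fin (m + 1) → Fin n), ∃ c d : II, r ∈ Words τ m →
      tp (r 0).castSucc (Θ j) ≤ c ∧ c < d ∧ d ≤ bt (r 0).succ (Θ j) ∧
      (((F^[m] (Θ j, c)).2 = tp (r (Fin.last m)).castSucc (Θ (j + m)) ∧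
          (F^[m] (Θ j, d)).2 = bt (r (Fin.last m)).succ (Θ (j + m))) ∨
        ((F^[m] (Θ j, c)).2 = bt (r (Fin.last m)).succ (Θ (j + m)) ∧
          (F^[m] (Θ j, d)).2 = tp (r (Fin.last m)).castSucc (Θ (j + m)))) ∧
      (∀ x, c < x → x < d → ∀ i : Fin (m + 1), tp (r i).castSucc (Θ (j + i)) < (F^[i] (Θ j, x)).2 ∧
        (F^[i] (Θ j, x)).2 < bt (r i).succ (Θ (j + i))) ∧ η ≤ dist c d := by
    intro j r
    by_cases hr : r ∈ Words τ m
    swap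
    · exact ⟨0, 0, fun h => absurd h hr⟩
    obtain ⟨v, hv, hrv⟩ := hr
    obtain ⟨c, d, h1, h2, h3, h4, h5⟩ := itinerary hFc hrot m (Θ j)
      (fun i => tp (v i).castSucc (Θ (j + i))) (fun i => bt (v i).succ (Θ (j + i)))
      (fun i => hK _ _) (fun i => by
        rw [hΘ]
        exact hcross (j + i) _ _ (hv i))
    refine ⟨c, d, fun _ => ⟨?_, h2, ?_, ?_, ?_, ?_⟩⟩
    · rw [hrv]; exact h1
    · rw [hrv]; exact h3
    · rw [hrv]; exact h4
    · intro x hx1 hx2 i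
      rw [hrv]; exact h5 x hx1 hx2 i (by omega)
    · by_contra hcon
      rw [not_le] at hcon
      have hcon' : dist ((Θ j, c) : Cyl) (Θ j, d) < η := by
        rw [Prod.dist_eq, max_lt_iff]
        exact ⟨by simpa using hη, hcon⟩
      have h6 := hUC hcon'
      have hfs : ∀ x, F^[m] (Θ j, x) = (Θ (j + m), (F^[m] (Θ j, x)).2) := fun x =>
        Prod.ext (by rw [iter_rot hrot, hΘ]) rfl
      rw [hfs c, hfs d] at h6
      have h7 := hgap (v m) _ (htp1 _ (Θ (j + m))) _ (hbt1 _ (Θ (j + m)))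
      rcases h4 with ⟨e1, e2⟩ | ⟨e1, e2⟩
      · rw [e1, e2] at h6
        linarith
      · rw [e1, e2, dist_comm] at h6
        linarith
  choose c d hcd using hlev1
  -- second level
  let blk : (ℕ → Fin n) → ℕ → Fin (m + 1) → Fin n := fun v j i => v (m * j + i)
  have hblk : ∀ v, IsPath τ v → ∀ j, blk v j ∈ Words τ m := fun v hv j =>
    ⟨fun i => v (m * j + i), hv.shift _, fun i => rfl⟩
  have hlev2 : ∀ v, IsPath τ v → ∃ x : II, ∀ i < k,
      c (m * i) (blk v i) < (F^[m * i] (θ0, x)).2 ∧ (F^[m * i] (θ0, x)).2 < d (m * i) (blk v i) := by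
    intro v hv
    obtain ⟨a, b, -, h2, -, -, h5⟩ := itinerary (hFc.iterate m) (iter_rot hrot m) k θ0
      (fun i => c (m * i) (blk v i)) (fun i => d (m * i) (blk v i))
      (fun i => (hcd _ _ (hblk v hv i)).2.1) (fun i => by
        obtain ⟨-, -, -, e4, -, -⟩ := hcd _ _ (hblk v hv i)
        obtain ⟨e1, -, e3, -, -, -⟩ := hcd _ _ (hblk v hv (i + 1))
        have hθ : θ0 + i • (m • (ω : S1)) = Θ (m * i) := by
          simp only [Θ]; rw [mul_nsmul]
        rw [hθ]
        have hw1 : blk v i (Fin.last m) = blk v (i + 1) 0 := by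
          simp only [blk]; congr 1
        rw [hw1] at e4
        rw [← Nat.mul_succ] at e4
        rcases e4 with ⟨u, w⟩ | ⟨u, w⟩
        · exact Or.inl ⟨u.le.trans e1, e3.trans w.ge⟩
        · exact Or.inr ⟨w.le.trans e1, e3.trans u.ge⟩)
    obtain ⟨x, hx1, hx2⟩ := exists_between h2
    refine ⟨x, fun i hi => ?_⟩
    rw [Function.iterate_mul]
    exact h5 x hx1 hx2 i hi.le
  -- counting
  have hex : ∀ r : Words τ (m * k), ∃ (v : ℕ → Fin n) (x : II) (z : t), IsPath τ v ∧
      (∀ i : Fin (m * k + 1), r.1 i = v i) ∧ (∀ i < k,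
      c (m * i) (blk v i) < (F^[m * i] (θ0, x)).2 ∧ (F^[m * i] (θ0, x)).2 < d (m * i) (blk v i)) ∧
      ∀ i < k, dist (F^[m * i] (θ0, x)).2 (F^[m * i] z.1).2 < η := by
    rintro ⟨r, v, hv, hrv⟩
    obtain ⟨x, hx⟩ := hlev2 v hv
    obtain ⟨z, hz, hzd⟩ := ht (θ0, x)
    refine ⟨v, x, ⟨z, hz⟩, hv, hrv, hx, fun i hi => ?_⟩
    have := hzd (m * i) (Nat.mul_lt_mul_of_pos_left hi hm)
    rw [Prod.dist_eq, max_lt_iff] at this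
    exact this.2
  choose V X Z hV hrV hX hZ using hex
  let Φ : Words τ (m * k) → (Fin k → Fin 3) × t := fun r =>
    (fun i => code (c (m * i) (blk (V r) i)) (d (m * i) (blk (V r) i)) (F^[m * i] (Z r).1).2, Z r)
  have hΦ : Function.Injective Φ := by
    intro r r' hrr
    have hZZ : Z r = Z r' := congrArg Prod.snd hrr
    have hcode := congrArg Prod.fst hrr
    have hb : ∀ i < k, blk (V r) i = blk (V r') i := by
      intro i hi
      by_contra hne
      have hci := congrFun hcode ⟨i, hi⟩
      simp only [Φ] at hci
      rw [hZZ] at hci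
      obtain ⟨-, -, -, -, f5, f6⟩ := hcd (m * i) _ (hblk _ (hV r) i)
      obtain ⟨-, -, -, -, g5, g6⟩ := hcd (m * i) _ (hblk _ (hV r') i)
      have hz1 := hZ r i hi
      rw [hZZ] at hz1
      refine code_inj (hX r i hi).1 (hX r i hi).2 (hX r' i hi).1 (hX r' i hi).2 hz1 (hZ r' i hi)
        f6 g6 ?_ hci
      intro z z1 z2 z3 z4
      apply hne
      funext s
      exact hKdis _ _ _ _ (f5 z z1 z2 s).1 (f5 z z1 z2 s).2 (g5 z z3 z4 s).1 (g5 z z3 z4 s).2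
    apply Subtype.ext
    funext s
    rw [hrV r, hrV r']
    rcases Nat.lt_or_ge (s : ℕ) (m * k) with hs | hs
    · have hq : (s : ℕ) / m < k := Nat.div_lt_of_lt_mul hs
      have := congrFun (hb _ hq) ⟨(s : ℕ) % m, (Nat.mod_lt _ hm).trans (Nat.lt_succ_self _)⟩
      simp only [blk] at this
      rwa [Nat.div_add_mod] at this
    · have hse : (s : ℕ) = m * (k - 1) + m := by
        have := s.2
        have h3 : m * (k - 1) + m = m * k := by
          rw [← Nat.mul_succ, Nat.succ_eq_add_one, Nat.sub_add_cancel hk]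
        omega
      have := congrFun (hb (k - 1) (by omega)) (Fin.last m)
      simp only [blk, Fin.val_last] at this
      rwa [← hse] at this
  have := Nat.card_le_card_of_injective Φ hΦ
  rw [Nat.card_prod, Nat.card_coe_set_eq] at this
  simpa using this

end lower

/-- if `F` exhibits the strips pattern `τ` then
`h(F) ≥ h(F_τ) = h(f_τ)`. -/
theorem entropy_ge_tau_linear {n : ℕ}
    (τ : Equiv.Perm (Fin (n + 1))) (hτ : IsCyclicPerm τ)
    (fτ : II → II) (p : Fin (n + 1) → II) (hp : StrictMono p)
    (hlin : IsPLinear fτ p) (hpat : ∀ i, fτ (p i) = p (τ i))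
    (ω : ℝ) (hω : Irrational ω)
    (Fτ : Cyl → Cyl) (hFτ : ∀ q : Cyl, Fτ q = (q.1 + (ω : S1), fτ q.2))
    (F : Cyl → Cyl) (hF : IsQPF F) (hEx : ExhibitsStripPattern F τ) :
    hTop Fτ ≤ hTop F ∧ hTop Fτ = hTop fτ := by
  have h1 := hTop_prod fτ ω Fτ hFτ
  refine ⟨?_, h1⟩
  rw [h1]
  unfold hTop
  apply growth
  intro ε hε δ hδ
  obtain ⟨C, hC⟩ := upper hp hlin hpat hε
  obtain ⟨m, hm⟩ := exists_nat_gt (Real.log 3 / δ)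
  have hm0 : 0 < m := by
    have : (0 : ℝ) < m := lt_trans (div_pos (Real.log_pos (by norm_num)) hδ) hm
    exact_mod_cast this
  obtain ⟨η, hη, hlow⟩ := lower hF hEx m hm0
  refine ⟨η, hη, m, hm0, 2 * C * (m + 1), 3, by norm_num, ?_, ?_⟩
  · rw [div_lt_iff₀ hδ, mul_comm] at hm
    exact (Real.log_lt_iff_lt_exp (by norm_num)).1 hm
  · intro k hk t ht
    obtain ⟨s, hs, hsc⟩ := hC (m * k)
    refine ⟨s, hs, ?_⟩
    have h2 := hlow k hk t ht
    have htpos : 0 < t.card := by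
      obtain ⟨z, hz, _⟩ := ht (0, 0)
      exact Finset.card_pos.2 ⟨z, hz⟩
    have h3 : (Words τ (m * k)).ncard + 1 ≤ 2 * (3 ^ k * t.card) := by
      have : 0 < 3 ^ k * t.card := by positivity
      omega
    have h4 : m * k + 1 ≤ (m + 1) * (k + 1) := by nlinarith
    have h5 : s.card ≤ C * ((m + 1) * (k + 1)) * (2 * (3 ^ k * t.card)) :=
      hsc.trans (Nat.mul_le_mul (Nat.mul_le_mul le_rfl h4) h3)
    have h6 : (s.card : ℝ) ≤ C * ((m + 1) * (k + 1)) * (2 * (3 ^ k * t.card)) := by exact_mod_cast h5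
    calc (s.card : ℝ) ≤ _ := h6
      _ = _ := by ring
end

section
/- For every strips pattern τ, the entropy of the pattern satisfies h(τ) = h(F_τ) = h(f_τ); that is, the infimum of the topological entropies of all maps in S(Ω) exhibiting τ equals the topological entropy of the τ-linear interval map, and it is attained by the quasiperiodic τ-linear map F_τ. -/
open Dynamics Set

section Aux

open Filter Topology Uniformity ENNReal

lemma growth_aux (r : ℝ) (hr : 0 < r) :
    ∃ N : ℕ, 0 < N ∧ ∀ C : ℕ, ∀ᶠ m : ℕ in atTop,
      ((C * (m + 1) * 2 ^ (m / N + 1) : ℕ) : ℝ) ≤ Real.exp (r * m) := by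
  obtain ⟨N, hN⟩ := exists_nat_gt (2 * Real.log 2 / r)
  have hlog : 0 < Real.log 2 := Real.log_pos (by norm_num)
  have hN0 : (0 : ℝ) < N := lt_trans (by positivity) hN
  refine ⟨N, by exact_mod_cast hN0, fun C => ?_⟩
  have h1 : Tendsto (fun m : ℕ => (((2 * C : ℝ)) * (m : ℝ) + 2 * C) / Real.exp (r / 2 * m)) atTop (𝓝 0) := by
    have h2 : Tendsto (fun x : ℝ => (2 * C * (2 / r)) * (x ^ 1 * Real.exp (-x)) + 2 * C * (Real.exp (-x)))
        atTop (𝓝 ((2 * C * (2 / r)) * 0 + 2 * C * 0)) :=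
      ((Real.tendsto_pow_mul_exp_neg_atTop_nhds_zero 1).const_mul _).add
        (Real.tendsto_exp_neg_atTop_nhds_zero.const_mul _)
    have h3 : Tendsto (fun m : ℕ => r / 2 * (m : ℝ)) atTop atTop :=
      tendsto_natCast_atTop_atTop.const_mul_atTop (by positivity)
    have h4 := h2.comp h3
    simp only [mul_zero, add_zero] at h4
    refine h4.congr fun m => ?_
    simp only [Function.comp, Real.exp_neg]
    field_simp
  have h5 := h1.eventually (gt_mem_nhds (zero_lt_one))
  filter_upwards [h5] with m hm
  rw [div_lt_one (Real.exp_pos _)] at hm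
  have h6 : (2 : ℝ) ^ (m / N) ≤ Real.exp (r / 2 * m) := by
    rw [← Real.exp_log (show (0 : ℝ) < 2 by norm_num), ← Real.exp_nat_mul,
      Real.exp_log (show (0 : ℝ) < 2 by norm_num)]
    apply Real.exp_le_exp.2
    have h7 : ((m / N : ℕ) : ℝ) ≤ m / N := Nat.cast_div_le
    have h8 : 2 * Real.log 2 ≤ r * N := by
      rw [div_lt_iff₀ hr] at hN; linarith
    calc ((m / N : ℕ) : ℝ) * Real.log 2 ≤ m / N * Real.log 2 := by gcongr
      _ ≤ m / N * (r * N / 2) := by gcongr; linarith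
      _ = r / 2 * m := by field_simp
  push_cast
  rw [pow_succ]
  calc (C : ℝ) * (m + 1) * (2 ^ (m / N) * 2) = (2 * C * m + 2 * C) * 2 ^ (m / N) := by ring
    _ ≤ Real.exp (r / 2 * m) * Real.exp (r / 2 * m) := by gcongr
    _ = Real.exp (r * m) := by rw [← Real.exp_add]; ring_nf

lemma entropy_le_aux {X Y : Type} [UniformSpace X] [UniformSpace Y] [Nonempty Y]
    (S : X → X) (T : Y → Y)
    (h : ∀ r : ℝ, 0 < r → ∀ U ∈ 𝓤 X, ∃ V ∈ 𝓤 Y, ∀ᶠ m : ℕ in atTop,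
      ((coverMincard S univ U m : ℕ∞) : ℝ≥0∞) ≤
        ENNReal.ofReal (Real.exp (r * m)) * ((coverMincard T univ V m : ℕ∞) : ℝ≥0∞)) :
    hTop S ≤ hTop T := by
  unfold hTop
  refine iSup₂_le fun U hU => ?_
  have key : ∀ r : ℝ, 0 < r → coverEntropyEntourage S univ U ≤ (r : EReal) + coverEntropy T univ := by
    intro r hr
    obtain ⟨V, hV, hm⟩ := h r hr U hU
    have h0 : ExpGrowth.expGrowthSup (fun m : ℕ => ENNReal.ofReal (Real.exp (r * m))) = (r : EReal) := by
      rw [← ExpGrowth.expGrowthSup_exp (a := (r : EReal))]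
      congr 1
    calc coverEntropyEntourage S univ U ≤ _ := ExpGrowth.expGrowthSup_eventually_monotone hm
      _ ≤ _ := ExpGrowth.expGrowthSup_mul_le (by rw [h0]; simp) (by rw [h0]; simp)
      _ ≤ (r : EReal) + coverEntropy T univ := by
        rw [h0]
        gcongr
        exact coverEntropyEntourage_le_coverEntropy T univ hV
  have hnn : 0 ≤ coverEntropy T univ := coverEntropy_nonneg T univ_nonempty
  generalize coverEntropy T univ = b at *
  generalize coverEntropyEntourage S univ U = a at *
  induction b using EReal.rec with
  | bot => simp at hnn
  | top => exact le_top
  | coe b =>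
    apply EReal.le_of_forall_lt_iff_le.1
    intro z hz
    have := key (z - b) (by have := EReal.coe_lt_coe_iff.1 hz; linarith)
    refine this.trans ?_
    rw [← EReal.coe_add]; simp

lemma cover_le_of_code {X α : Type} (T : X → X) (U : SetRel X X) (m : ℕ) (C : Finset α)
    (R : X → α → Prop) (h1 : ∀ x, ∃ a ∈ C, R x a)
    (h2 : ∀ a ∈ C, ∀ x y, R x a → R y a → (x, y) ∈ dynEntourage T U m) :
    coverMincard T univ U m ≤ C.card := by
  classical
  rcases isEmpty_or_nonempty X with hX | ⟨⟨x0⟩⟩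
  · have : (univ : Set X) = ∅ := by ext x; exact (hX.false x).elim
    rw [this]; simp
  let g : α → X := fun a => if h : ∃ x, R x a then h.choose else x0
  have hs : IsDynCoverOf T univ U m ((C.image g : Finset X) : Set X) := by
    intro x _
    obtain ⟨a, ha, hxa⟩ := h1 x
    refine ⟨g a, by simpa using ⟨a, ha, rfl⟩, ?_⟩
    have hex : ∃ x, R x a := ⟨x, hxa⟩
    have : g a = hex.choose := by simp only [g, dif_pos hex]
    rw [this]
    exact h2 a ha _ _ hxa hex.choose_spec
  refine hs.coverMincard_le_card.trans ?_
  exact_mod_cast Finset.card_image_le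

end Aux

section Comb

open Classical in
/-- restrictions to length `m` of a set of words -/
noncomputable def resF {n : ℕ} (m : ℕ) (A : Set (ℕ → Fin n)) : Finset (Fin m → Fin n) :=
  Finset.univ.filter (fun a => ∃ w ∈ A, ∀ i : Fin m, w i = a i)

def Arr {n : ℕ} (τ : Equiv.Perm (Fin (n + 1))) (k l : Fin n) : Prop :=
  (τ k.castSucc ≤ l.castSucc ∧ l.succ ≤ τ k.succ) ∨
  (τ k.succ ≤ l.castSucc ∧ l.succ ≤ τ k.castSucc)

def WW {n : ℕ} (τ : Equiv.Perm (Fin (n + 1))) : Set (ℕ → Fin n) :=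
  {w | ∀ i, Arr τ (w i) (w (i + 1))}

def EndOf {n : ℕ} (c : Fin (n + 1)) (k : Fin n) : Prop := c = k.castSucc ∨ c = k.succ

lemma mem_resF {n m : ℕ} {A : Set (ℕ → Fin n)} {a : Fin m → Fin n} :
    a ∈ resF m A ↔ ∃ w ∈ A, ∀ i : Fin m, w i = a i := by
  classical
  simp [resF]

lemma count_aux {n : ℕ} (N : ℕ) (A : Set (ℕ → Fin n)) (m : ℕ)
    (h3 : ∀ u ∈ A, ∀ v ∈ A, ∀ w ∈ A, ∀ i < m, u i ≠ v i → v i ≠ w i → u i ≠ w i → False)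
    (h2 : ∀ u ∈ A, ∀ v ∈ A, ∀ w ∈ A, ∀ i < m, u i = v i → v i ≠ w i →
      ∀ s ≤ N, u (i + s) = v (i + s)) :
    ∀ q L : ℕ, L ≤ m → L ≤ q * N → (resF L A).card ≤ 2 ^ q := by
  classical
  intro q
  induction q with
  | zero =>
    intro L _ hL
    have : L = 0 := by omega
    subst this
    simpa using (Finset.card_le_univ (resF 0 A))
  | succ q ih =>
    intro L hLm hL
    have hL' : L - N ≤ L := Nat.sub_le _ _
    let g : (Fin L → Fin n) → (Fin (L - N) → Fin n) := fun a i => a (Fin.castLE hL' i)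
    have himg : (resF L A).image g ⊆ resF (L - N) A := by
      intro b hb
      obtain ⟨a, ha, rfl⟩ := Finset.mem_image.1 hb
      obtain ⟨w, hw, hwa⟩ := mem_resF.1 ha
      exact mem_resF.2 ⟨w, hw, fun i => hwa (Fin.castLE hL' i)⟩
    have hc := Finset.card_le_mul_card_image (f := g) (resF L A) 2 ?_
    · calc (resF L A).card ≤ 2 * ((resF L A).image g).card := hc
        _ ≤ 2 * (resF (L - N) A).card := by gcongr
        _ ≤ 2 * 2 ^ q := by
          gcongr
          refine ih _ (by omega) ?_
          rw [Nat.succ_mul] at hL; omega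
        _ = 2 ^ (q + 1) := by ring
    · intro b _
      by_contra hcon
      push Not at hcon
      obtain ⟨a1, h1, a2, hh2, a3, hh3, h12, h13, h23⟩ := Finset.two_lt_card.1 hcon
      simp only [Finset.mem_filter] at h1 hh2 hh3
      obtain ⟨u, hu, hua⟩ := mem_resF.1 h1.1
      obtain ⟨v, hv, hva⟩ := mem_resF.1 hh2.1
      obtain ⟨w, hw, hwa⟩ := mem_resF.1 hh3.1
      have huv : ∃ i, i < L ∧ u i ≠ v i := by
        by_contra hne; push Not at hne
        exact h12 (funext fun i => by rw [← hua, ← hva, hne i i.2])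
      have huw : ∃ i, i < L ∧ u i ≠ w i := by
        by_contra hne; push Not at hne
        exact h13 (funext fun i => by rw [← hua, ← hwa, hne i i.2])
      have hvw : ∃ i, i < L ∧ v i ≠ w i := by
        by_contra hne; push Not at hne
        exact h23 (funext fun i => by rw [← hva, ← hwa, hne i i.2])
      have hpre : ∀ i, i < L - N → u i = v i ∧ v i = w i := by
        intro i hi
        have e1 := congrFun h1.2 ⟨i, hi⟩
        have e2 := congrFun hh2.2 ⟨i, hi⟩
        have e3 := congrFun hh3.2 ⟨i, hi⟩
        have f1 := hua (Fin.castLE hL' ⟨i, hi⟩)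
        have f2 := hva (Fin.castLE hL' ⟨i, hi⟩)
        have f3 := hwa (Fin.castLE hL' ⟨i, hi⟩)
        simp only [g] at e1 e2 e3
        rw [e1] at f1; rw [e2] at f2; rw [e3] at f3
        simp only [Fin.val_castLE] at f1 f2 f3
        exact ⟨f1.trans f2.symm, f2.trans f3.symm⟩
      have hex : ∃ i, ¬ (u i = v i ∧ v i = w i) := by
        obtain ⟨i, _, hi⟩ := huv
        exact ⟨i, fun h => hi h.1⟩
      set i := Nat.find hex with hi
      have hi1 : ¬ (u i = v i ∧ v i = w i) := Nat.find_spec hex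
      have hi2 : ∀ j < i, u j = v j ∧ v j = w j := fun j hj => by
        have := Nat.find_min hex hj
        tauto
      have hi3 : L - N ≤ i := by
        by_contra hlt
        exact hi1 (hpre i (by omega))
      have hiL : i < L := by
        obtain ⟨j, hj, hj'⟩ := huv
        refine lt_of_le_of_lt (Nat.find_min' hex (fun h => hj' h.1)) hj
      have fin : ∀ x y : ℕ → Fin n, (∃ j, j < L ∧ x j ≠ y j) → (∀ j < i, x j = y j) →
          (∀ s ≤ N, x (i + s) = y (i + s)) → False := by
        rintro x y ⟨j, hj, hne⟩ hlt hge
        rcases lt_or_ge j i with h | h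
        · exact hne (hlt j h)
        · have := hge (j - i) (by omega)
          rw [show i + (j - i) = j by omega] at this
          exact hne this
      by_cases e1 : u i = v i
      · exact fin u v huv (fun j hj => (hi2 j hj).1)
          (h2 u hu v hv w hw i (by omega) e1 (fun h => hi1 ⟨e1, h⟩))
      by_cases e2 : v i = w i
      · exact fin v w hvw (fun j hj => (hi2 j hj).2)
          (h2 v hv w hw u hu i (by omega) e2 (fun h => e1 (h.symm.trans e2.symm)))
      by_cases e3 : u i = w i
      · exact fin u w huw (fun j hj => (hi2 j hj).1.trans (hi2 j hj).2)
          (h2 u hu w hw v hv i (by omega) e3 (fun h => e2 h.symm))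
      exact h3 u hu v hv w hw i (by omega) e1 e2 e3

lemma count_words {n : ℕ} (τ : Equiv.Perm (Fin (n + 1))) (N : ℕ) (hN : 0 < N)
    (A : Set (ℕ → Fin n)) (hA : A ⊆ WW τ) (m : ℕ)
    (h : ∀ u ∈ A, ∀ w ∈ A, ∀ i < m, u i ≠ w i → ∃ c : Fin (n + 1), ∀ s ≤ N,
      EndOf (τ^[s] c) (u (i + s)) ∧ EndOf (τ^[s] c) (w (i + s))) :
    (resF m A).card ≤ 2 ^ (m / N + 1) := by
  refine count_aux N A m ?_ ?_ (m / N + 1) m le_rfl ?_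
  · intro u hu v hv w hw i hi h1 h2 h3
    obtain ⟨c1, hc1⟩ := h u hu v hv i hi h1
    obtain ⟨c2, hc2⟩ := h v hv w hw i hi h2
    obtain ⟨c3, hc3⟩ := h u hu w hw i hi h3
    have a1 := hc1 0 (Nat.zero_le _)
    have a2 := hc2 0 (Nat.zero_le _)
    have a3 := hc3 0 (Nat.zero_le _)
    simp only [Function.iterate_zero, id, add_zero, EndOf, Fin.ext_iff, Fin.val_castSucc,
      Fin.val_succ, ne_eq] at *
    omega
  · intro u hu v hv w hw i hi h1 h2
    have h1' : u i ≠ w i := fun e => h2 (h1.symm.trans e)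
    obtain ⟨c1, hc1⟩ := h u hu w hw i hi h1'
    obtain ⟨c2, hc2⟩ := h v hv w hw i hi h2
    have hcc : c1 = c2 := by
      have a1 := hc1 0 (Nat.zero_le _)
      have a2 := hc2 0 (Nat.zero_le _)
      simp only [Function.iterate_zero, id, add_zero, EndOf, Fin.ext_iff, Fin.val_castSucc,
        Fin.val_succ, ne_eq] at *
      omega
    subst hcc
    intro s
    induction s with
    | zero => intro _; simpa using h1
    | succ s ih =>
      intro hs
      have e := ih (by omega)
      have b0 := (hc1 s (by omega)).1
      have b1 := (hc1 (s + 1) hs).1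
      have b2 := (hc2 (s + 1) hs).1
      have r1 := hA hu (i + s)
      have r2 := hA hv (i + s)
      rw [← e] at r2
      rw [← add_assoc] at b1 b2 ⊢
      rw [Function.iterate_succ_apply'] at b1 b2
      generalize τ^[s] c1 = c at *
      generalize u (i + s) = k at *
      simp only [EndOf] at b0
      unfold Arr at r1 r2
      simp only [EndOf, Fin.ext_iff, Fin.le_def, Fin.val_castSucc, Fin.val_succ] at b1 b2 r1 r2 ⊢
      rcases b0 with rfl | rfl <;> omega
  · have := Nat.lt_div_mul_add (a := m) hN
    rw [Nat.succ_mul]; omega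

end Comb

section Lower

open Filter Topology Uniformity ENNReal

lemma generic_data {n : ℕ} (B : Fin (n + 1) → Set Cyl) (hB : ∀ i, IsStrip (B i))
    (hlt : ∀ i j : Fin (n + 1), i < j → stripLT (B i) (B j)) (ω : ℝ) :
    ∃ (θ : ℕ → S1) (top bot : ℕ → Fin (n + 1) → II),
      (∀ j, θ (j + 1) = θ j + (ω : S1)) ∧
      (∀ j c, IsGreatest (fiber (B c) (θ j)) (top j c)) ∧
      (∀ j c, IsLeast (fiber (B c) (θ j)) (bot j c)) ∧
      (∀ j c d, c < d → top j c < bot j d) := by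
  have h1 : ∀ᶠ θ in residual S1, ∀ c d : Fin (n + 1), c < d → MA (B c) θ < mA (B d) θ := by
    rw [eventually_all]; intro c
    rw [eventually_all]; intro d
    by_cases h : c < d
    · obtain ⟨G, hG, hG'⟩ := hlt c d h
      filter_upwards [hG] with θ hθ _ using hG' θ hθ
    · exact Eventually.of_forall fun θ h' => absurd h' h
  have h2 : ∀ᶠ θ in residual S1, ∀ j : ℕ, ∀ c d : Fin (n + 1), c < d →
      MA (B c) (θ + j • (ω : S1)) < mA (B d) (θ + j • (ω : S1)) := by
    rw [eventually_countable_forall]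
    intro j
    have ht : Tendsto (fun θ : S1 => θ + j • (ω : S1)) (residual S1) (residual S1) :=
      tendsto_residual_of_isOpenMap (by fun_prop) (isOpenMap_add_right _)
    exact ht.eventually h1
  obtain ⟨θ0, hθ0⟩ := (dense_of_mem_residual h2).nonempty
  have hcomp : ∀ c θ, IsCompact (fiber (B c) θ) := by
    intro c θ
    apply IsClosed.isCompact
    exact (hB c).1.preimage (f := fun x : II => (θ, x)) (by fun_prop)
  have hnon : ∀ c θ, (fiber (B c) θ).Nonempty := fun c θ => (hB c).2.1 θ
  have hG : ∀ (j : ℕ) c, ∃ x, IsGreatest (fiber (B c) (θ0 + j • (ω : S1))) x := fun j c =>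
    (hcomp c _).exists_isGreatest (hnon c _)
  have hL : ∀ (j : ℕ) c, ∃ x, IsLeast (fiber (B c) (θ0 + j • (ω : S1))) x := fun j c =>
    (hcomp c _).exists_isLeast (hnon c _)
  choose top htop using hG
  choose bot hbot using hL
  refine ⟨fun j => θ0 + j • (ω : S1), top, bot, fun j => ?_, htop, hbot, ?_⟩
  · simp only [succ_nsmul, add_assoc]
  · intro j c d hcd
    have := hθ0 j c d hcd
    have e1 : MA (B c) (θ0 + j • (ω : S1)) = top j c :=
      ((Subtype.mono_coe _).map_isGreatest (htop j c)).csSup_eq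
    have e2 : mA (B d) (θ0 + j • (ω : S1)) = bot j d :=
      ((Subtype.mono_coe _).map_isLeast (hbot j d)).csInf_eq
    rw [e1, e2] at this
    exact_mod_cast this

lemma exists_sep {n : ℕ} (B : Fin (n + 1) → Set Cyl) (hB : ∀ i, IsStrip (B i))
    (hd : Pairwise fun i j => Disjoint (B i) (B j)) :
    ∃ δ : ℝ, 0 < δ ∧ ∀ c d, c ≠ d → ∀ z ∈ B c, ∀ z' ∈ B d, δ ≤ dist z z' := by
  have h : ∀ᶠ δ in 𝓝[>] (0 : ℝ), ∀ c d, c ≠ d → ∀ z ∈ B c, ∀ z' ∈ B d, δ ≤ dist z z' := by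
    rw [eventually_all]; intro c
    rw [eventually_all]; intro d
    by_cases hcd : c = d
    · exact Eventually.of_forall fun θ h' => absurd hcd h'
    obtain ⟨r, hr, hr'⟩ := Metric.exists_pos_forall_lt_edist (hB c).1.isCompact (hB d).1 (hd hcd)
    have : Set.Ioo (0 : ℝ) r ∈ 𝓝[>] (0 : ℝ) := Ioo_mem_nhdsGT (by exact_mod_cast hr)
    filter_upwards [this] with δ hδ _ z hz z' hz'
    have h1 := hr' z hz z' hz'
    rw [edist_dist, ENNReal.lt_ofReal_iff_toReal_lt ENNReal.coe_ne_top] at h1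
    simp at h1
    exact (hδ.2.trans h1).le
  obtain ⟨δ, h1, h2⟩ := (h.and self_mem_nhdsWithin).exists
  exact ⟨δ, h2, h1⟩

lemma dist_fiber (θ : S1) (x y : II) : dist ((θ, x) : Cyl) (θ, y) = |(x : ℝ) - y| := by
  rw [Prod.dist_eq]; simp [Subtype.dist_eq, Real.dist_eq]

lemma lower_bound {n : ℕ} (τ : Equiv.Perm (Fin (n + 1))) (F : Cyl → Cyl) (hF : IsQPF F)
    (hE : ExhibitsStripPattern F τ) (N : ℕ) (hN : 0 < N) :
    ∃ V ∈ 𝓤 Cyl, ∀ m : ℕ, ∀ s : Finset Cyl, IsDynCoverOf F univ V m s →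
      (resF m (WW τ)).card ≤ s.card * 2 ^ (m / N + 1) := by
  classical
  obtain ⟨hFc, ω, -, hFω⟩ := hF
  obtain ⟨B, hB, hlt, hdis, hFB⟩ := hE
  obtain ⟨θ, top, bot, hθ, htop, hbot, htb⟩ := generic_data B hB hlt ω
  obtain ⟨δ, hδ, hsep⟩ := exists_sep B hB hdis
  have hbt : ∀ j c, bot j c ≤ top j c := fun j c => (hbot j c).2 (htop j c).1
  have hbb : ∀ j c d, c ≤ d → bot j c ≤ bot j d := by
    intro j c d h
    rcases h.eq_or_lt with rfl | h
    · exact le_rfl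
    · exact (hbt j c).trans (htb j c d h).le
  have htt : ∀ j c d, c ≤ d → top j c ≤ top j d := by
    intro j c d h
    rcases h.eq_or_lt with rfl | h
    · exact le_rfl
    · exact (htb j c d h).le.trans (hbt j d)
  have hstep : ∀ j x, F (θ j, x) = (θ (j + 1), (F (θ j, x)).2) := by
    intro j x
    refine Prod.ext ?_ rfl
    rw [hFω, hθ]
  have hmapB : ∀ c z, z ∈ B c → F z ∈ B (τ c) := fun c z hz => hFB c ▸ mem_image_of_mem F hz
  have hmapB' : ∀ s c z, z ∈ B c → F^[s] z ∈ B (τ^[s] c) := by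
    intro s
    induction s with
    | zero => intro c z hz; exact hz
    | succ s ih => intro c z hz; exact ih _ _ (hmapB c z hz)
  -- ends
  have hend : ∀ j (k : Fin n) x c y, top j k.castSucc ≤ x → x ≤ bot j k.succ →
      (θ j, y) ∈ B c → dist ((θ j, x) : Cyl) (θ j, y) < δ → EndOf c k := by
    intro j k x c y hx1 hx2 hy hd
    by_contra hne
    simp only [EndOf, not_or] at hne
    rw [dist_fiber] at hd
    rcases lt_or_ge c k.castSucc with h | h
    · have h1 := hsep c k.castSucc hne.1 (θ j, y) hy (θ j, top j k.castSucc) (htop j _).1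
      have h2 : y ≤ top j k.castSucc := ((htop j c).2 hy).trans (htt j _ _ h.le)
      rw [dist_fiber] at h1
      rw [← Subtype.coe_le_coe] at h2 hx1
      rw [abs_of_nonpos (by linarith)] at h1
      rw [abs_of_nonneg (by linarith)] at hd
      linarith
    · have hc : k.succ ≤ c := by
        have := lt_of_le_of_ne h (Ne.symm hne.1)
        exact Fin.castSucc_lt_iff_succ_le.1 this
      have h1 := hsep c k.succ hne.2 (θ j, y) hy (θ j, bot j k.succ) (hbot j _).1
      have h2 : bot j k.succ ≤ y := (hbb j _ _ hc).trans ((hbot j c).2 hy)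
      rw [dist_fiber] at h1
      rw [← Subtype.coe_le_coe] at h2 hx2
      rw [abs_of_nonneg (by linarith)] at h1
      rw [abs_of_nonpos (by linarith)] at hd
      linarith
  -- covering
  have hcov : ∀ j (k l : Fin n), Arr τ k l → ∀ y, top (j + 1) l.castSucc ≤ y →
      y ≤ bot (j + 1) l.succ → ∃ x, (top j k.castSucc ≤ x ∧ x ≤ bot j k.succ) ∧
        (F (θ j, x)).2 = y := by
    intro j k l hkl y hy1 hy2
    have hle : top j k.castSucc ≤ bot j k.succ := (htb j _ _ Fin.castSucc_lt_succ).le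
    have hcont : ContinuousOn (fun x : II => (F (θ j, x)).2)
        (Set.Icc (top j k.castSucc) (bot j k.succ)) := by
      apply Continuous.continuousOn; fun_prop
    have m1 : (θ (j + 1), (F (θ j, top j k.castSucc)).2) ∈ B (τ k.castSucc) := by
      rw [← hstep]; exact hmapB _ _ (htop j _).1
    have m2 : (θ (j + 1), (F (θ j, bot j k.succ)).2) ∈ B (τ k.succ) := by
      rw [← hstep]; exact hmapB _ _ (hbot j _).1
    rcases hkl with ⟨h1, h2⟩ | ⟨h1, h2⟩
    · have hI := intermediate_value_Icc hle hcont
      obtain ⟨x, hx, hxy⟩ := hI ⟨(((htop (j + 1) _).2 m1).trans (htt _ _ _ h1)).trans hy1,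
        hy2.trans ((hbb _ _ _ h2).trans ((hbot (j + 1) _).2 m2))⟩
      exact ⟨x, hx, hxy⟩
    · have hI := intermediate_value_Icc' hle hcont
      obtain ⟨x, hx, hxy⟩ := hI ⟨(((htop (j + 1) _).2 m2).trans (htt _ _ _ h1)).trans hy1,
        hy2.trans ((hbb _ _ _ h2).trans ((hbot (j + 1) _).2 m1))⟩
      exact ⟨x, hx, hxy⟩
  -- realization
  have hreal : ∀ w ∈ WW τ, ∀ M j, ∃ x : II, ∀ i ≤ M, ∃ y, F^[i] (θ j, x) = (θ (j + i), y) ∧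
      top (j + i) (w (j + i)).castSucc ≤ y ∧ y ≤ bot (j + i) (w (j + i)).succ := by
    intro w hw M
    induction M with
    | zero =>
      intro j
      refine ⟨top j (w j).castSucc, fun i hi => ?_⟩
      obtain rfl : i = 0 := by omega
      exact ⟨_, rfl, le_rfl, (htb j _ _ Fin.castSucc_lt_succ).le⟩
    | succ M ih =>
      intro j
      obtain ⟨y, hy⟩ := ih (j + 1)
      obtain ⟨y0, e0, hy0, hy0'⟩ := hy 0 (Nat.zero_le _)
      simp only [Function.iterate_zero, id, add_zero, Prod.mk.injEq, true_and] at e0 hy0 hy0'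
      subst e0
      obtain ⟨x, hx, hxy⟩ := hcov j (w j) (w (j + 1)) (hw j) y hy0 hy0'
      refine ⟨x, fun i hi => ?_⟩
      rcases i with _ | i
      · exact ⟨x, rfl, hx.1, hx.2⟩
      · rw [Function.iterate_succ_apply, hstep, hxy]
        have := hy i (by omega)
        rw [show j + (i + 1) = j + 1 + i by omega]
        exact this
  have hU : dynEntourage F {q : Cyl × Cyl | dist q.1 q.2 < δ} (N + 1) ∈ 𝓤 Cyl :=
    dynEntourage_mem_uniformity (CompactSpace.uniformContinuous_of_continuous hFc)
      (Metric.dist_mem_uniformity hδ) _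
  obtain ⟨η, hη, hηU⟩ := Metric.mem_uniformity_dist.1 hU
  refine ⟨{q : Cyl × Cyl | dist q.1 q.2 < η / 2}, Metric.dist_mem_uniformity (by positivity), ?_⟩
  intro m s hs
  have hx : ∀ w : ℕ → Fin n, ∃ x : II, w ∈ WW τ → ∀ i ≤ m + N, ∃ y, F^[i] (θ 0, x) = (θ i, y) ∧
      top i (w i).castSucc ≤ y ∧ y ≤ bot i (w i).succ := by
    intro w
    by_cases hw : w ∈ WW τ
    · obtain ⟨x, hx⟩ := hreal w hw (m + N) 0
      exact ⟨x, fun _ => by simpa using hx⟩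
    · exact ⟨0, fun h => absurd h hw⟩
  choose X hX using hx
  let A : Cyl → Set (ℕ → Fin n) := fun c =>
    {w | w ∈ WW τ ∧ ∀ i < m, dist (F^[i] (θ 0, X w)) (F^[i] c) < η / 2}
  have hsub : resF m (WW τ) ⊆ s.biUnion (fun c => resF m (A c)) := by
    intro a ha
    obtain ⟨w, hw, hwa⟩ := mem_resF.1 ha
    obtain ⟨c, hc, hcw⟩ := hs (mem_univ ((θ 0, X w) : Cyl))
    refine Finset.mem_biUnion.2 ⟨c, hc, mem_resF.2 ⟨w, ⟨hw, ?_⟩, hwa⟩⟩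
    exact mem_dynEntourage.1 hcw
  refine (Finset.card_le_card hsub).trans (Finset.card_biUnion_le_card_mul _ _ _ fun c _ => ?_)
  refine count_words τ N hN (A c) (fun w hw => hw.1) m ?_
  -- main separation
  have main : ∀ u ∈ A c, ∀ w ∈ A c, ∀ i < m, u i < w i → ∃ c : Fin (n + 1), ∀ s ≤ N,
      EndOf (τ^[s] c) (u (i + s)) ∧ EndOf (τ^[s] c) (w (i + s)) := by
    intro u hu w hw i hi huw
    obtain ⟨y, ey, hy1, hy2⟩ := hX u hu.1 i (by omega)
    obtain ⟨z, ez, hz1, hz2⟩ := hX w hw.1 i (by omega)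
    have hdist : dist ((θ i, y) : Cyl) (θ i, z) < η := by
      have d1 := hu.2 i hi
      have d2 := hw.2 i hi
      rw [ey] at d1; rw [ez] at d2
      have := dist_triangle_right ((θ i, y) : Cyl) (θ i, z) (F^[i] c)
      linarith
    have hbz : bot i (u i).succ ≤ z := by
      refine ((hbt i _).trans (htt i _ _ ?_)).trans hz1
      exact Fin.succ_le_castSucc_iff.2 huw
    set b := bot i (u i).succ with hb
    have hbB : ((θ i, b) : Cyl) ∈ B (u i).succ := (hbot i _).1
    rw [dist_fiber] at hdist
    have hy2' : (y : ℝ) ≤ b := hy2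
    have hbz' : (b : ℝ) ≤ z := hbz
    rw [abs_of_nonpos (by linarith)] at hdist
    have dy : dist ((θ i, y) : Cyl) (θ i, b) < η := by
      rw [dist_fiber, abs_of_nonpos (by linarith)]; linarith
    have dz : dist ((θ i, z) : Cyl) (θ i, b) < η := by
      rw [dist_fiber, abs_of_nonneg (by linarith)]; linarith
    refine ⟨(u i).succ, fun s hs => ?_⟩
    have hbs : ∀ s, ∃ b', F^[s] (θ i, b) = (θ (i + s), b') := by
      intro s
      induction s with
      | zero => exact ⟨b, rfl⟩
      | succ s ih =>
        obtain ⟨b', hb'⟩ := ih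
        rw [Function.iterate_succ_apply', hb', hstep]
        exact ⟨_, rfl⟩
    obtain ⟨b', hb'⟩ := hbs s
    have hb'B := hmapB' s _ _ hbB
    rw [hb'] at hb'B
    have gen : ∀ v ∈ A c, ∀ y, F^[i] (θ 0, X v) = (θ i, y) → dist ((θ i, y) : Cyl) (θ i, b) < η →
        EndOf (τ^[s] (u i).succ) (v (i + s)) := by
      intro v hv y ey dy
      obtain ⟨y', ey', hy1, hy2⟩ := hX v hv.1 (i + s) (by omega)
      have := mem_dynEntourage.1 (hηU dy) s (by omega)
      simp only [Set.mem_ofPred_eq] at this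
      rw [hb', ← ey, ← Function.iterate_add_apply, add_comm s i, ey'] at this
      exact hend (i + s) (v (i + s)) y' _ b' hy1 hy2 hb'B this
    exact ⟨gen u hu y ey dy, gen w hw z ez dz⟩
  intro u hu w hw i hi hne
  rcases lt_or_gt_of_ne hne with h | h
  · exact main u hu w hw i hi h
  · obtain ⟨c, hc⟩ := main w hw u hu i hi h
    exact ⟨c, fun s hs => (hc s hs).symm⟩

end Lower

section Upper

open Filter Topology Uniformity ENNReal

lemma exists_between_idx {n : ℕ} (p : Fin (n + 1) → II) (hp : StrictMono p) (a : Fin (n + 1)) (y : II)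
    (ha : p a ≤ y) : ∀ b : Fin (n + 1), a < b → y ≤ p b →
    ∃ l : Fin n, a ≤ l.castSucc ∧ l.succ ≤ b ∧ p l.castSucc ≤ y ∧ y ≤ p l.succ := by
  intro b
  induction b using Fin.induction with
  | zero => intro h; exact absurd h (Fin.not_lt_zero a)
  | succ i ih =>
    intro hab hy
    have hle : a ≤ i.castSucc := Fin.le_castSucc_iff.2 hab
    rcases le_or_gt (p i.castSucc) y with h | h
    · exact ⟨i, hle, le_rfl, h, hy⟩
    · have : a < i.castSucc := by
        refine lt_of_le_of_ne hle ?_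
        rintro rfl
        exact absurd ha (not_le.2 h)
      obtain ⟨l, h1, h2, h3, h4⟩ := ih this h.le
      exact ⟨l, h1, h2.trans Fin.castSucc_lt_succ.le, h3, h4⟩

lemma affine_diff {f : II → II} {a b : II} (hab : a < b) (h : AffineOnIcc f a b) {x y : II}
    (hx : a ≤ x ∧ x ≤ b) (hy : a ≤ y ∧ y ≤ b) :
    ((b : ℝ) - a) * ((f y : ℝ) - f x) = ((y : ℝ) - x) * ((f b : ℝ) - f a) := by
  have h1 := h x hx.1 hx.2
  have h2 := h y hy.1 hy.2
  linarith

lemma affine_mono {f : II → II} {a b : II} (hab : a < b) (h : AffineOnIcc f a b)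
    (hf : f a ≤ f b) {x y : II}
    (hx : a ≤ x ∧ x ≤ b) (hy : a ≤ y ∧ y ≤ b) (hxy : (x : ℝ) ≤ y) : (f x : ℝ) ≤ f y := by
  have h1 := affine_diff hab h hx hy
  have hab' : (0 : ℝ) < (b : ℝ) - a := sub_pos.2 (by exact_mod_cast hab)
  have hf' : (0 : ℝ) ≤ (f b : ℝ) - f a := sub_nonneg.2 (by exact_mod_cast hf)
  have h3 : 0 ≤ ((b : ℝ) - a) * ((f y : ℝ) - f x) := by
    rw [h1]; exact mul_nonneg (by linarith) hf'
  have := nonneg_of_mul_nonneg_right h3 hab'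
  linarith

lemma affine_anti {f : II → II} {a b : II} (hab : a < b) (h : AffineOnIcc f a b)
    (hf : f b ≤ f a) {x y : II}
    (hx : a ≤ x ∧ x ≤ b) (hy : a ≤ y ∧ y ≤ b) (hxy : (x : ℝ) ≤ y) : (f y : ℝ) ≤ f x := by
  have h1 := affine_diff hab h hx hy
  have hab' : (0 : ℝ) < (b : ℝ) - a := sub_pos.2 (by exact_mod_cast hab)
  have hf' : (0 : ℝ) ≤ (f a : ℝ) - f b := sub_nonneg.2 (by exact_mod_cast hf)
  have h3 : 0 ≤ ((b : ℝ) - a) * ((f x : ℝ) - f y) := by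
    have : ((b : ℝ) - a) * ((f x : ℝ) - f y) = ((y : ℝ) - x) * ((f a : ℝ) - f b) := by linarith
    rw [this]; exact mul_nonneg (by linarith) hf'
  have := nonneg_of_mul_nonneg_right h3 hab'
  linarith

lemma exists_word {n : ℕ} (τ : Equiv.Perm (Fin (n + 1)))
    (f : II → II) (p : Fin (n + 1) → II) (hp : StrictMono p)
    (hlin : IsPLinear f p) (hpat : ∀ i, f (p i) = p (τ i)) (x : II)
    (h0 : p 0 < x) (h1 : x < p (Fin.last n)) :
    ∃ w ∈ WW τ, ∀ i, p (w i).castSucc ≤ f^[i] x ∧ f^[i] x ≤ p (w i).succ := by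
  have step : ∀ q : {q : Fin n × II // p q.1.castSucc ≤ q.2 ∧ q.2 ≤ p q.1.succ},
      ∃ r : {q : Fin n × II // p q.1.castSucc ≤ q.2 ∧ q.2 ≤ p q.1.succ},
        r.1.2 = f q.1.2 ∧ Arr τ q.1.1 r.1.1 := by
    rintro ⟨⟨k, y⟩, hy⟩
    simp only at hy
    have hab : p k.castSucc < p k.succ := hp Fin.castSucc_lt_succ
    have haf := hlin.2.1 k
    have ea : p k.castSucc ≤ p k.castSucc ∧ p k.castSucc ≤ p k.succ := ⟨le_rfl, hab.le⟩
    have eb : p k.castSucc ≤ p k.succ ∧ p k.succ ≤ p k.succ := ⟨hab.le, le_rfl⟩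
    have hne : τ k.castSucc ≠ τ k.succ := fun h => Fin.castSucc_lt_succ.ne (τ.injective h)
    rcases lt_or_gt_of_ne hne with h | h
    · have hf : f (p k.castSucc) ≤ f (p k.succ) := by rw [hpat, hpat]; exact (hp h).le
      have m1 : f (p k.castSucc) ≤ f y := affine_mono hab haf hf ea hy hy.1
      have m2 : f y ≤ f (p k.succ) := affine_mono hab haf hf hy eb hy.2
      rw [hpat] at m1 m2
      obtain ⟨l, l1, l2, l3, l4⟩ := exists_between_idx p hp _ _ m1 _ h m2
      exact ⟨⟨(l, f y), l3, l4⟩, rfl, Or.inl ⟨l1, l2⟩⟩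
    · have hf : f (p k.succ) ≤ f (p k.castSucc) := by rw [hpat, hpat]; exact (hp h).le
      have m1 : f y ≤ f (p k.castSucc) := affine_anti hab haf hf ea hy hy.1
      have m2 : f (p k.succ) ≤ f y := affine_anti hab haf hf hy eb hy.2
      rw [hpat] at m1 m2
      obtain ⟨l, l1, l2, l3, l4⟩ := exists_between_idx p hp _ _ m2 _ h m1
      exact ⟨⟨(l, f y), l3, l4⟩, rfl, Or.inr ⟨l1, l2⟩⟩
  choose nx hnx1 hnx2 using step
  have hlast : (0 : Fin (n + 1)) < Fin.last n := hp.lt_iff_lt.1 (h0.trans h1)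
  obtain ⟨l, -, -, l3, l4⟩ := exists_between_idx p hp 0 x h0.le _ hlast h1.le
  let q0 : {q : Fin n × II // p q.1.castSucc ≤ q.2 ∧ q.2 ≤ p q.1.succ} := ⟨(l, x), l3, l4⟩
  have hx : ∀ i, (nx^[i] q0).1.2 = f^[i] x := by
    intro i
    induction i with
    | zero => rfl
    | succ i ih => rw [Function.iterate_succ_apply', Function.iterate_succ_apply', hnx1, ih]
  refine ⟨fun i => (nx^[i] q0).1.1, fun i => ?_, fun i => ?_⟩
  · have := hnx2 (nx^[i] q0)
    simp only [Function.iterate_succ_apply']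
    exact this
  · rw [← hx i]
    exact (nx^[i] q0).2

open Classical in
noncomputable def sgJ {n : ℕ} (f : II → II) (p : Fin (n + 1) → II) (k : Fin n) : ℝ :=
  if f (p k.castSucc) ≤ f (p k.succ) then 1 else -1

noncomputable def sgW {n : ℕ} (f : II → II) (p : Fin (n + 1) → II) (w : ℕ → Fin n) (i : ℕ) : ℝ :=
  ∏ j ∈ Finset.range i, sgJ f p (w j)

lemma sgJ_cases {n : ℕ} (f : II → II) (p : Fin (n + 1) → II) (k : Fin n) :
    (sgJ f p k = 1 ∧ f (p k.castSucc) ≤ f (p k.succ)) ∨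
    (sgJ f p k = -1 ∧ f (p k.succ) ≤ f (p k.castSucc)) := by
  unfold sgJ
  split_ifs with h
  · exact Or.inl ⟨rfl, h⟩
  · exact Or.inr ⟨rfl, (not_le.1 h).le⟩

lemma sgW_cases {n : ℕ} (f : II → II) (p : Fin (n + 1) → II) (w : ℕ → Fin n) (i : ℕ) :
    sgW f p w i = 1 ∨ sgW f p w i = -1 := by
  induction i with
  | zero => left; simp [sgW]
  | succ i ih =>
    have e : sgW f p w (i + 1) = sgW f p w i * sgJ f p (w i) := by
      simp [sgW, Finset.prod_range_succ]
    rw [e]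
    rcases ih with h | h <;> rcases sgJ_cases f p (w i) with ⟨h', _⟩ | ⟨h', _⟩ <;>
      rw [h, h'] <;> norm_num

lemma sgW_mono {n : ℕ} (f : II → II) (p : Fin (n + 1) → II) (hp : StrictMono p)
    (hlin : IsPLinear f p) (w : ℕ → Fin n) (m : ℕ) (x y : II) (hxy : x ≤ y)
    (hx : ∀ i < m, p (w i).castSucc ≤ f^[i] x ∧ f^[i] x ≤ p (w i).succ)
    (hy : ∀ i < m, p (w i).castSucc ≤ f^[i] y ∧ f^[i] y ≤ p (w i).succ) :
    ∀ i < m, sgW f p w i * (f^[i] x : ℝ) ≤ sgW f p w i * (f^[i] y : ℝ) := by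
  intro i
  induction i with
  | zero => intro _; simpa [sgW] using hxy
  | succ i ih =>
    intro hi
    have hc := ih (by omega)
    have e : sgW f p w (i + 1) = sgW f p w i * sgJ f p (w i) := by
      simp [sgW, Finset.prod_range_succ]
    have X := hx i (by omega)
    have Y := hy i (by omega)
    rw [e, Function.iterate_succ_apply', Function.iterate_succ_apply']
    have hab : p (w i).castSucc < p (w i).succ := hp Fin.castSucc_lt_succ
    have haf := hlin.2.1 (w i)
    rcases sgW_cases f p w i with h | h <;> rcases sgJ_cases f p (w i) with ⟨h', hf⟩ | ⟨h', hf⟩ <;>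
      rw [h] at hc ⊢ <;> rw [h']
    · have := affine_mono hab haf hf X Y (by linarith); linarith
    · have := affine_anti hab haf hf X Y (by linarith); linarith
    · have := affine_mono hab haf hf Y X (by linarith); linarith
    · have := affine_anti hab haf hf Y X (by linarith); linarith

lemma floor_close {K : ℕ} (hK : 0 < K) {s : ℝ} (hs : s = 1 ∨ s = -1) {x y : II}
    (h : ⌊s * (x : ℝ) * K⌋ = ⌊s * (y : ℝ) * K⌋) : dist x y < 1 / (K : ℝ) := by
  have hK' : (0 : ℝ) < K := by exact_mod_cast hK
  have := Int.abs_sub_lt_one_of_floor_eq_floor h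
  rw [Subtype.dist_eq, Real.dist_eq, lt_div_iff₀ hK']
  have e : s * (x : ℝ) * K - s * (y : ℝ) * K = s * (((x : ℝ) - y) * K) := by ring
  rw [e, abs_mul, abs_mul, abs_of_pos hK'] at this
  have hs' : |s| = 1 := by rcases hs with rfl | rfl <;> simp
  rwa [hs', one_mul] at this

lemma floor_range {K : ℕ} {s : ℝ} (hs : s = 1 ∨ s = -1) (x : II) :
    -(K : ℤ) ≤ ⌊s * (x : ℝ) * K⌋ ∧ ⌊s * (x : ℝ) * K⌋ ≤ K := by
  have h0 := x.2.1
  have h1 := x.2.2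
  have hK' : (0 : ℝ) ≤ K := by positivity
  have hh : (x : ℝ) * K ≤ K := by nlinarith
  have hh' : 0 ≤ (x : ℝ) * K := by positivity
  constructor
  · apply Int.le_floor.2
    push_cast
    rcases hs with rfl | rfl <;> nlinarith
  · have : ⌊s * (x : ℝ) * K⌋ < (K : ℤ) + 1 := by
      apply Int.floor_lt.2
      push_cast
      rcases hs with rfl | rfl <;> nlinarith
    omega

lemma upper_bound {n : ℕ} (τ : Equiv.Perm (Fin (n + 1)))
    (f : II → II) (p : Fin (n + 1) → II) (hp : StrictMono p)
    (hlin : IsPLinear f p) (hpat : ∀ i, f (p i) = p (τ i)) (K : ℕ) (hK : 0 < K) (m : ℕ) :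
    coverMincard f univ {q : II × II | dist q.1 q.2 < 1 / (K : ℝ)} m ≤
      (((resF m (WW τ)).card * (2 * m * K + 1) + 2 * (K + 1) : ℕ) : ℕ∞) := by
  classical
  have hK' : (0 : ℝ) < K := by exact_mod_cast hK
  let T : Finset (ℕ → Fin n) :=
    (resF m (WW τ)).attach.image (fun a => (mem_resF.1 a.2).choose)
  have hT : ∀ w ∈ WW τ, ∃ w' ∈ T, ∀ i < m, w' i = w i := by
    intro w hw
    have ha : (fun i : Fin m => w i) ∈ resF m (WW τ) := mem_resF.2 ⟨w, hw, fun _ => rfl⟩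
    refine ⟨(mem_resF.1 ha).choose, ?_, ?_⟩
    · exact Finset.mem_image.2 ⟨⟨_, ha⟩, Finset.mem_attach _ _, rfl⟩
    · intro i hi
      exact (mem_resF.1 ha).choose_spec.2 ⟨i, hi⟩
  have hTc : T.card ≤ (resF m (WW τ)).card := by
    refine Finset.card_image_le.trans ?_
    simp
  let C1 : Finset ((ℕ → Fin n) × ℤ) := T ×ˢ Finset.Icc (-((m * K : ℕ) : ℤ)) ((m * K : ℕ) : ℤ)
  let C2 : Finset (Bool × ℤ) := Finset.univ ×ˢ Finset.Icc (0 : ℤ) K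
  let Φ : (ℕ → Fin n) → II → ℤ := fun w x =>
    ∑ i ∈ Finset.range m, ⌊sgW f p w i * (f^[i] x : ℝ) * K⌋
  let R : II → ((ℕ → Fin n) × ℤ) ⊕ (Bool × ℤ) → Prop := fun x a =>
    match a with
    | Sum.inl (w, z) => (∀ i < m, p (w i).castSucc ≤ f^[i] x ∧ f^[i] x ≤ p (w i).succ) ∧ z = Φ w x
    | Sum.inr (true, z) => x ≤ p 0 ∧ z = ⌊1 * (x : ℝ) * K⌋
    | Sum.inr (false, z) => p (Fin.last n) ≤ x ∧ z = ⌊1 * (x : ℝ) * K⌋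
  have hfl : ∀ x : II, ⌊1 * (x : ℝ) * K⌋ ∈ Finset.Icc (0 : ℤ) K := by
    intro x
    refine Finset.mem_Icc.2 ⟨?_, (floor_range (Or.inl rfl) x).2⟩
    have := x.2.1
    apply Int.floor_nonneg.2
    positivity
  have hres := cover_le_of_code f {q : II × II | dist q.1 q.2 < 1 / (K : ℝ)} m (C1.disjSum C2) R ?_ ?_
  · refine hres.trans ?_
    norm_cast
    rw [Finset.card_disjSum, Finset.card_product, Finset.card_product]
    simp only [Int.card_Icc, Finset.card_univ, Fintype.card_bool]
    have e1 : (((m * K : ℕ) : ℤ) + 1 - -((m * K : ℕ) : ℤ)).toNat = 2 * m * K + 1 := by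
      have : ((m * K : ℕ) : ℤ) + 1 - -((m * K : ℕ) : ℤ) = ((2 * m * K + 1 : ℕ) : ℤ) := by
        push_cast; ring
      rw [this, Int.toNat_natCast]
    have e2 : ((K : ℤ) + 1 - 0).toNat = K + 1 := by omega
    rw [e1, e2]
    gcongr
  · intro x
    rcases le_or_gt x (p 0) with h0 | h0
    · exact ⟨Sum.inr (true, ⌊1 * (x : ℝ) * K⌋), Finset.inr_mem_disjSum.2
        (Finset.mem_product.2 ⟨Finset.mem_univ _, hfl x⟩), h0, rfl⟩
    rcases le_or_gt (p (Fin.last n)) x with h1 | h1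
    · exact ⟨Sum.inr (false, ⌊1 * (x : ℝ) * K⌋), Finset.inr_mem_disjSum.2
        (Finset.mem_product.2 ⟨Finset.mem_univ _, hfl x⟩), h1, rfl⟩
    obtain ⟨w, hw, hwx⟩ := exists_word τ f p hp hlin hpat x h0 h1
    obtain ⟨w', hw', hww⟩ := hT w hw
    refine ⟨Sum.inl (w', Φ w' x), Finset.inl_mem_disjSum.2
        (Finset.mem_product.2 ⟨hw', Finset.mem_Icc.2 ⟨?_, ?_⟩⟩), ?_, rfl⟩
    · have : ∑ i ∈ Finset.range m, (-(K : ℤ)) ≤ Φ w' x :=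
        Finset.sum_le_sum fun i _ => (floor_range (sgW_cases f p w' i) _).1
      simp at this
      push_cast; linarith
    · have : Φ w' x ≤ ∑ i ∈ Finset.range m, (K : ℤ) :=
        Finset.sum_le_sum fun i _ => (floor_range (sgW_cases f p w' i) _).2
      simp at this
      push_cast; linarith
    · intro i hi
      rw [hww i hi]; exact hwx i
  · have side : ∀ x y : II, f x = f y → ⌊1 * (x : ℝ) * K⌋ = ⌊1 * (y : ℝ) * K⌋ →
        (x, y) ∈ dynEntourage f {q : II × II | dist q.1 q.2 < 1 / (K : ℝ)} m := by
      intro x y hf hfl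
      refine mem_dynEntourage.2 fun k _ => ?_
      rcases k with _ | k
      · exact floor_close hK (Or.inl rfl) hfl
      · show dist _ _ < _
        rw [Function.iterate_succ_apply, Function.iterate_succ_apply, hf, dist_self]
        positivity
    rintro (⟨w, z⟩ | ⟨_ | _, z⟩) _ x y hx hy
    · have gen : ∀ x y : II, x ≤ y → R x (Sum.inl (w, z)) → R y (Sum.inl (w, z)) →
          ∀ i < m, dist (f^[i] x) (f^[i] y) < 1 / (K : ℝ) := by
        intro x y hxy hx hy i hi
        have hm := sgW_mono f p hp hlin w m x y hxy hx.1 hy.1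
        have hle : ∀ i ∈ Finset.range m, ⌊sgW f p w i * (f^[i] x : ℝ) * K⌋ ≤
            ⌊sgW f p w i * (f^[i] y : ℝ) * K⌋ := by
          intro i hi
          apply Int.floor_le_floor
          have := hm i (Finset.mem_range.1 hi)
          gcongr
        have heq := (Finset.sum_eq_sum_iff_of_le hle).1 (hx.2.symm.trans hy.2) i
          (Finset.mem_range.2 hi)
        exact floor_close hK (sgW_cases f p w i) heq
      refine mem_dynEntourage.2 fun k hk => ?_
      rcases le_total x y with h | h
      · exact gen x y h hx hy k hk
      · have := gen y x h hy hx k hk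
        rw [dist_comm] at this
        exact this
    · exact side x y ((hlin.2.2.2 x hx.1).trans (hlin.2.2.2 y hy.1).symm) (hx.2.symm.trans hy.2)
    · exact side x y ((hlin.2.2.1 x hx.1).trans (hlin.2.2.1 y hy.1).symm) (hx.2.symm.trans hy.2)

end Upper

section Final

open Filter Topology Uniformity ENNReal

lemma cast_aux (a b c : ℕ) (E : ℝ) (hE : (c : ℝ) ≤ E) (h : a ≤ c * b)
    : (((a : ℕ∞) : ℝ≥0∞)) ≤ ENNReal.ofReal E * (((b : ℕ∞) : ℝ≥0∞)) := by
  have h1 : ((a : ℕ) : ℝ≥0∞) ≤ (c : ℝ≥0∞) * (b : ℝ≥0∞) := by exact_mod_cast h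
  have h2 : (c : ℝ≥0∞) ≤ ENNReal.ofReal E := by
    rw [← ENNReal.ofReal_natCast c]
    exact ENNReal.ofReal_le_ofReal hE
  simp only [ENat.toENNReal_coe]
  exact h1.trans (by gcongr)

lemma entropy_lower {n : ℕ} (τ : Equiv.Perm (Fin (n + 1)))
    (f : II → II) (p : Fin (n + 1) → II) (hp : StrictMono p)
    (hlin : IsPLinear f p) (hpat : ∀ i, f (p i) = p (τ i))
    (F : Cyl → Cyl) (hF : IsQPF F) (hE : ExhibitsStripPattern F τ) :
    hTop f ≤ hTop F := by
  apply entropy_le_aux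
  intro r hr U hU
  obtain ⟨N, hN, hg⟩ := growth_aux r hr
  obtain ⟨V, hV, hlow⟩ := lower_bound τ F hF hE N hN
  refine ⟨V, hV, ?_⟩
  obtain ⟨ε, hε, hUε⟩ := Metric.mem_uniformity_dist.1 hU
  obtain ⟨K', hK'⟩ := exists_nat_one_div_lt hε
  set K : ℕ := K' + 1 with hKdef
  have hKpos : 0 < K := Nat.succ_pos _
  have hsub : {q : II × II | dist q.1 q.2 < 1 / (K : ℝ)} ⊆ U := by
    rintro ⟨a, b⟩ hab
    apply hUε
    refine lt_trans hab ?_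
    simpa [hKdef] using hK'
  filter_upwards [hg (2 * K + 3)] with m hm
  have hfin := coverMincard_finite_of_isCompact_uniformContinuous (T := F)
    isCompact_univ (CompactSpace.uniformContinuous_of_continuous hF.1) hV m
  obtain ⟨s, hs, hsc⟩ := (coverMincard_finite_iff _ _ _ _).1 hfin
  have hs1 : 0 < s.card := by
    have := IsDynCoverOf.nonempty (univ_nonempty) hs
    exact Finset.card_pos.2 (by simpa using this)
  have hl := hlow m s hs
  have hub := upper_bound τ f p hp hlin hpat K hKpos m
  have h1 : coverMincard f univ U m ≤ _ := (coverMincard_antitone f univ m hsub).trans hub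
  rw [← hsc]
  refine le_trans (ENat.toENNReal_le.2 h1) (cast_aux _ _ _ _ hm ?_)
  set P := (resF m (WW τ)).card
  set Q := 2 ^ (m / N + 1)
  have hQ : 1 ≤ Q := Nat.one_le_two_pow
  have hA : 1 ≤ s.card * Q := Nat.mul_pos hs1 hQ
  calc P * (2 * m * K + 1) + 2 * (K + 1)
      ≤ (s.card * Q) * (2 * m * K + 1) + (s.card * Q) * (2 * (K + 1)) := by
        exact add_le_add (Nat.mul_le_mul_right _ hl) (Nat.le_mul_of_pos_left _ hA)
    _ = (s.card * Q) * (2 * m * K + 1 + 2 * (K + 1)) := by ring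
    _ ≤ (s.card * Q) * ((2 * K + 3) * (m + 1)) := by
        gcongr
        nlinarith
    _ = _ := by ring

lemma iter_prod (f : II → II) (ω : ℝ) (F : Cyl → Cyl)
    (hF : ∀ q : Cyl, F q = (q.1 + (ω : S1), f q.2)) (k : ℕ) (q : Cyl) :
    F^[k] q = (q.1 + k • (ω : S1), f^[k] q.2) := by
  induction k with
  | zero => simp
  | succ k ih =>
    rw [Function.iterate_succ_apply', ih, hF, Function.iterate_succ_apply', succ_nsmul, add_assoc]

lemma entropy_upper (f : II → II) (hf : Continuous f) (ω : ℝ) (F : Cyl → Cyl)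
    (hF : ∀ q : Cyl, F q = (q.1 + (ω : S1), f q.2)) :
    hTop F ≤ hTop f := by
  classical
  apply entropy_le_aux
  intro r hr U hU
  obtain ⟨N, hN, hg⟩ := growth_aux r hr
  obtain ⟨ε, hε, hUε⟩ := Metric.mem_uniformity_dist.1 hU
  refine ⟨{q : II × II | dist q.1 q.2 < ε}, Metric.dist_mem_uniformity hε, ?_⟩
  obtain ⟨t0, -, ht0f, ht0⟩ := Metric.totallyBounded_iff.1 (isCompact_univ (X := S1)).totallyBounded |>
    fun h => (⟨(h ε hε).choose, trivial, (h ε hε).choose_spec.1, (h ε hε).choose_spec.2⟩ :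
      ∃ t : Set S1, True ∧ t.Finite ∧ (univ : Set S1) ⊆ ⋃ y ∈ t, Metric.ball y ε)
  lift t0 to Finset S1 using ht0f
  filter_upwards [hg t0.card] with m hm
  have hfin := coverMincard_finite_of_isCompact_uniformContinuous (T := f)
    isCompact_univ (CompactSpace.uniformContinuous_of_continuous hf)
    (Metric.dist_mem_uniformity hε) m
  obtain ⟨s, hs, hsc⟩ := (coverMincard_finite_iff _ _ _ _).1 hfin
  have hcov : IsDynCoverOf F univ U m ((t0 ×ˢ s : Finset Cyl) : Set Cyl) := by
    rintro ⟨θ, x⟩ -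
    obtain ⟨y, hy, hxy⟩ := hs (mem_univ x)
    have := ht0 (mem_univ θ)
    simp only [mem_iUnion, Metric.mem_ball] at this
    obtain ⟨φ, hφ, hd⟩ := this
    refine ⟨(φ, y), by simpa using ⟨hφ, hy⟩, ?_⟩
    have hxy' := mem_dynEntourage.1 hxy
    refine mem_dynEntourage.2 fun k hk => ?_
    rw [iter_prod f ω F hF, iter_prod f ω F hF]
    apply hUε
    rw [Prod.dist_eq]
    refine max_lt ?_ (hxy' k hk)
    simpa using hd
  rw [← hsc]
  refine le_trans (ENat.toENNReal_le.2 hcov.coverMincard_le_card) (cast_aux _ _ _ _ hm ?_)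
  rw [Finset.card_product]
  gcongr
  have : 1 ≤ 2 ^ (m / N + 1) := Nat.one_le_two_pow
  calc t0.card = t0.card * 1 * 1 := by ring
    _ ≤ t0.card * (m + 1) * 2 ^ (m / N + 1) := by gcongr; omega

lemma qpf_F (f : II → II) (hf : Continuous f) (ω : ℝ) (hω : Irrational ω) (F : Cyl → Cyl)
    (hF : ∀ q : Cyl, F q = (q.1 + (ω : S1), f q.2)) : IsQPF F := by
  refine ⟨?_, ω, hω, fun q => by rw [hF]⟩
  have : F = fun q : Cyl => (q.1 + (ω : S1), f q.2) := funext hF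
  rw [this]
  fun_prop

lemma exhibits_F {n : ℕ} (τ : Equiv.Perm (Fin (n + 1)))
    (f : II → II) (p : Fin (n + 1) → II) (hp : StrictMono p)
    (hpat : ∀ i, f (p i) = p (τ i)) (ω : ℝ) (F : Cyl → Cyl)
    (hF : ∀ q : Cyl, F q = (q.1 + (ω : S1), f q.2)) : ExhibitsStripPattern F τ := by
  have hfib : ∀ i θ, fiber {q : Cyl | q.2 = p i} θ = {p i} := by
    intro i θ; ext x; simp [fiber]
  refine ⟨fun i => {q : Cyl | q.2 = p i}, ?_, ?_, ?_, ?_⟩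
  · intro i
    refine ⟨isClosed_eq continuous_snd continuous_const, fun θ => ⟨p i, rfl⟩, univ, univ_mem, ?_⟩
    intro θ _
    exact ⟨p i, p i, le_rfl, by rw [hfib, Icc_self]⟩
  · intro i j hij
    refine ⟨univ, univ_mem, fun θ _ => ?_⟩
    simp only [MA, mA, hfib, image_singleton, csSup_singleton, csInf_singleton]
    exact hp hij
  · intro i j hij
    refine Set.disjoint_left.2 ?_
    intro q h1 h2
    exact hij (hp.injective (Eq.trans (Eq.symm h1) h2))
  · intro i
    ext ⟨θ, x⟩
    constructor
    · rintro ⟨q, hq, h⟩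
      have hq' : q.2 = p i := hq
      rw [hF, hq', hpat] at h
      exact (congrArg Prod.snd h).symm
    · intro h
      have h' : x = p (τ i) := h
      refine ⟨(θ - (ω : S1), p i), rfl, ?_⟩
      rw [hF]
      simp [hpat, h']

end Final

/-- `h(τ) = h(F_τ) = h(f_τ)` for every strips pattern `τ`. -/
theorem pattern_entropy_eq {n : ℕ}
    (τ : Equiv.Perm (Fin (n + 1))) (hτ : IsCyclicPerm τ)
    (fτ : II → II) (p : Fin (n + 1) → II) (hp : StrictMono p)
    (hlin : IsPLinear fτ p) (hpat : ∀ i, fτ (p i) = p (τ i))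
    (ω : ℝ) (hω : Irrational ω)
    (Fτ : Cyl → Cyl) (hFτ : ∀ q : Cyl, Fτ q = (q.1 + (ω : S1), fτ q.2)) :
    patternEntropy τ = hTop Fτ ∧ hTop Fτ = hTop fτ := by
  have h1 : patternEntropy τ ≤ hTop Fτ :=
    sInf_le ⟨Fτ, qpf_F fτ hlin.1 ω hω Fτ hFτ, exhibits_F τ fτ p hp hpat ω Fτ hFτ, rfl⟩
  have h2 : hTop Fτ ≤ hTop fτ := entropy_upper fτ hlin.1 ω Fτ hFτ
  have h3 : hTop fτ ≤ patternEntropy τ := by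
    refine le_sInf ?_
    rintro e ⟨F, hF, hE, rfl⟩
    exact entropy_lower τ fτ p hp hlin hpat F hF hE
  exact ⟨le_antisymm h1 (h2.trans h3), le_antisymm h2 (h3.trans h1)⟩
end
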